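/- Let (R, m) be a Gorenstein Noetherian local ring and let I be an ideal of R of height 3 such that: I has finite projective dimension as an R-module; I is generically a complete intersection (i.e., for every associated prime p of I, the ideal I_p of the local ring R_p is generated by a regular sequence); and the quotient ring R/I is Gorenstein. Then I is syzygetic. -/

import Mathlib

universe u

open TensorProduct in
/-- An ideal `I` of a commutative ring `R` is *syzygetic* if the complex
`∧²(I) → I ⊗ I → I² → 0` is exact, where the first map sends `u ∧ v` to `v ⊗ u - u ⊗ v`
and the second map is induced by multiplication. Equivalently, the multiplication map
`I ⊗ I → R` has range `I²` and kernel spanned by the elements `b ⊗ a - a ⊗ b`. -/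
def Ideal.IsSyzygetic {R : Type*} [CommRing R] (I : Ideal R) : Prop :=
  LinearMap.range (Submodule.mulMap I I) = I * I ∧
    LinearMap.ker (Submodule.mulMap I I) =
      Submodule.span R {w : I ⊗[R] I | ∃ a b : I, w = b ⊗ₜ a - a ⊗ₜ b}

open CategoryTheory in
/-- A commutative ring `S` is a *Gorenstein (Noetherian local) ring* if it is Noetherian,
local, and has finite injective dimension as a module over itself; the latter is expressed
by the vanishing of `Ext^i(M, S)` for all `S`-modules `M` and all `i` beyond some bound. -/
def IsGorensteinLocalRing (S : Type u) [CommRing S] : Prop :=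
  IsNoetherianRing S ∧ IsLocalRing S ∧
    ∃ n : ℕ, ∀ (M : ModuleCat.{u} S) (i : ℕ), n < i →
      Subsingleton (((Ext S (ModuleCat.{u} S) i).obj (Opposite.op M)).obj (ModuleCat.of S S))

/-- The height of an ideal `I`: the infimum of the heights of the prime ideals
containing `I`. -/
noncomputable def idealHeight {R : Type*} [CommRing R] (I : Ideal R) : ℕ∞ :=
  ⨅ (p : PrimeSpectrum R) (_ : I ≤ p.asIdeal), Order.height p

open CategoryTheory in
/-- The `R`-module `M` has projective dimension at most `n`:
`Ext^i(M, N) = 0` for all modules `N` and all `i > n`. -/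
def projectiveDimensionLE (R : Type u) [CommRing R] (M : ModuleCat.{u} R) (n : ℕ) : Prop :=
  ∀ (N : ModuleCat.{u} R) (i : ℕ), n < i →
    Subsingleton (((Ext R (ModuleCat.{u} R) i).obj (Opposite.op M)).obj N)

/-!
A Gorenstein local ring has finite injective dimension, so it admits a maximal regular sequence
whose quotient has a one-dimensional socle. Comparing such sequences for `R` and `R ⧸ I` shows that
`I` contains a regular sequence of length three and that the depth of `R` exceeds that of `R ⧸ I`
by three. By the argument of Auslander and Buchsbaum the minimal free resolution of `R ⧸ I` is then
`0 → K → G → F → R`, and `K ≅ R` because `R ⧸ I` has type one.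

A multiplication on this resolution, as in the work of Buchsbaum and Eisenbud, pairs `F` perfectly
with `G`, which turns the middle map into an alternating matrix `Φ` and the outer maps into the same
vector `x` of generators of `I`. A tensor in `I ⊗ I` is given by a matrix `T`, and it is killed by
multiplication when `x ⬝ᵥ T *ᵥ x = 0`. Modulo alternating matrices and multiples of `Φ`, such a `T`
is annihilated by `I`; as these relations have the short resolution `0 → R × Alt → Mat → Mat ⧸ Alt`,
the regular sequence of length three in `I` forces `T` to be a relation itself.
-/

namespace GorensteinHeightThree

open RingTheory.Sequence Pointwise

/-! ### Alternating resolutions -/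

section RegularSequences

variable {R M : Type*} [CommRing R] [AddCommGroup M] [Module R M]

theorem isWeaklyRegular_of_flat [Module.Flat R M] {rs : List R} (h : IsWeaklyRegular R rs) :
    IsWeaklyRegular M rs :=
  (TensorProduct.rid R M).isWeaklyRegular_congr rs |>.1 h.isWeaklyRegular_lTensor

variable {a b c : R}

theorem exists_eq_smul_of_isWeaklyRegular_pair (h : IsWeaklyRegular M [a, b]) {u v : M}
    (huv : b • u = a • v) : ∃ y, u = a • y := by
  have hb : IsSMulRegular (QuotSMulTop a M) b := by
    simpa using ((isWeaklyRegular_cons_iff M a [b]).1 h).2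
  have hu : Submodule.Quotient.mk (p := a • (⊤ : Submodule R M)) u = 0 := by
    apply hb.right_eq_zero_of_smul
    rw [← Submodule.Quotient.mk_smul, huv, Submodule.Quotient.mk_eq_zero]
    exact Submodule.smul_mem_pointwise_smul v a ⊤ trivial
  obtain ⟨y, -, hy⟩ := (Submodule.Quotient.mk_eq_zero _).1 hu
  exact ⟨y, hy.symm⟩

theorem exists_eq_smul_add_smul_of_isWeaklyRegular_triple (h : IsWeaklyRegular M [a, b, c])
    {u v w : M} (huvw : c • u = a • v + b • w) : ∃ y z, u = a • y + b • z := by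
  let q := Submodule.Quotient.mk (p := a • (⊤ : Submodule R M))
  have hbc := ((isWeaklyRegular_cons_iff M a [b, c]).1 h).2
  have hq : c • q u = b • q w := by
    change q (c • u) = q (b • w)
    rw [Submodule.Quotient.eq, huvw, add_sub_cancel_right]
    exact Submodule.smul_mem_pointwise_smul v a ⊤ trivial
  obtain ⟨z, hz⟩ := exists_eq_smul_of_isWeaklyRegular_pair hbc hq
  obtain ⟨z, rfl⟩ := Submodule.Quotient.mk_surjective _ z
  obtain ⟨y, -, hy⟩ := (Submodule.Quotient.eq (a • (⊤ : Submodule R M)) (x := u) (y := b • z)).1 hz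
  exact ⟨y, z, by rw [eq_comm, ← eq_sub_iff_add_eq]; exact hy⟩

end RegularSequences

section Acyclicity

variable {R C₃ C₂ C₁ : Type*} [CommRing R] [AddCommGroup C₃] [Module R C₃] [AddCommGroup C₂]
  [Module R C₂] [AddCommGroup C₁] [Module R C₁] {f : C₃ →ₗ[R] C₂} {g : C₂ →ₗ[R] C₁} {a b c : R}

theorem mem_range_of_smul_mem_range_of_injective (h₃ : IsWeaklyRegular C₃ [a, b])
    (h₂ : IsSMulRegular C₂ a) (hf : Function.Injective f) {z : C₂}
    (ha : a • z ∈ LinearMap.range f) (hb : b • z ∈ LinearMap.range f) :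
    z ∈ LinearMap.range f := by
  obtain ⟨u, hu⟩ := ha
  obtain ⟨v, hv⟩ := hb
  obtain ⟨y, rfl⟩ := exists_eq_smul_of_isWeaklyRegular_pair h₃ (u := u) (v := v)
    (hf (by rw [map_smul, map_smul, hu, hv, smul_comm]))
  exact ⟨y, h₂ (by simpa using hu)⟩

theorem mem_range_of_smul_mem_range_of_exact (h₃ : IsWeaklyRegular C₃ [a, b, c])
    (h₂ : IsWeaklyRegular C₂ [a, b]) (h₁ : IsSMulRegular C₁ a) (hf : Function.Injective f)
    (hfg : Function.Exact f g) {z : C₁} (ha : a • z ∈ LinearMap.range g)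
    (hb : b • z ∈ LinearMap.range g) (hc : c • z ∈ LinearMap.range g) :
    z ∈ LinearMap.range g := by
  obtain ⟨u, hu⟩ := ha
  obtain ⟨v, hv⟩ := hb
  obtain ⟨w, hw⟩ := hc
  obtain ⟨p, hp⟩ := (hfg (b • u - a • v)).1 (by
    rw [map_sub, map_smul, map_smul, hu, hv, smul_comm, sub_self])
  obtain ⟨q, hq⟩ := (hfg (c • u - a • w)).1 (by
    rw [map_sub, map_smul, map_smul, hu, hw, smul_comm, sub_self])
  obtain ⟨r, hr⟩ := (hfg (c • v - b • w)).1 (by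
    rw [map_sub, map_smul, map_smul, hv, hw, smul_comm, sub_self])
  obtain ⟨s, t, hp'⟩ := exists_eq_smul_add_smul_of_isWeaklyRegular_triple h₃
    (u := p) (v := -r) (w := q) (hf (by
      simp only [map_smul, map_add, map_neg, hp, hq, hr]
      module))
  obtain ⟨y, hy⟩ := exists_eq_smul_of_isWeaklyRegular_pair h₂ (u := u - f t) (v := v + f s) (by
    rw [hp', map_add, map_smul, map_smul] at hp
    rw [smul_sub, smul_add, sub_eq_iff_eq_add, add_assoc, hp]
    abel)
  refine ⟨y, h₁ ?_⟩
  have hgf : g (f t) = 0 := hfg.apply_apply_eq_zero t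
  simpa [hgf, hu] using (congrArg g hy).symm

end Acyclicity

open Matrix

section AlternatingMatrices

variable (R ι : Type*) [CommRing R] [Fintype ι]

/-- The module of alternating matrices, i.e. of those whose quadratic form vanishes. Unlike
skew-symmetry this forces a zero diagonal also when `2` is a zero divisor. -/
def alternatingMatrices : Submodule R (Matrix ι ι R) where
  carrier := {A | ∀ v, v ⬝ᵥ A *ᵥ v = 0}
  add_mem' hA hB v := by rw [add_mulVec, dotProduct_add, hA, hB, add_zero]
  zero_mem' v := by simp
  smul_mem' r A hA v := by rw [smul_mulVec, dotProduct_smul, hA, smul_zero]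

variable {R ι} {A : Matrix ι ι R}

theorem sub_transpose_mem_alternatingMatrices (Z : Matrix ι ι R) :
    Z - Zᵀ ∈ alternatingMatrices R ι := fun v => by
  rw [sub_mulVec, dotProduct_sub, mulVec_transpose, dotProduct_comm v (v ᵥ* Z),
    ← dotProduct_mulVec, sub_self]

theorem diag_eq_zero_of_mem_alternatingMatrices (hA : A ∈ alternatingMatrices R ι) (i : ι) :
    A i i = 0 := by
  classical
  simpa using hA (Pi.single i 1)

theorem transpose_eq_neg_of_mem_alternatingMatrices (hA : A ∈ alternatingMatrices R ι) :
    Aᵀ = -A := by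
  classical
  ext i j
  have h := hA (Pi.single i 1 + Pi.single j 1)
  simp only [mulVec_add, dotProduct_add, add_dotProduct, mulVec_single_one, single_one_dotProduct,
    col_apply, diag_eq_zero_of_mem_alternatingMatrices hA, zero_add, add_zero] at h
  exact eq_neg_of_add_eq_zero_left h

theorem vecMul_eq_neg_mulVec_of_mem_alternatingMatrices (hA : A ∈ alternatingMatrices R ι)
    (v : ι → R) : v ᵥ* A = -(A *ᵥ v) := by
  rw [← mulVec_transpose, transpose_eq_neg_of_mem_alternatingMatrices hA, neg_mulVec]

theorem dotProduct_mul_mul_mulVec (hA : A ∈ alternatingMatrices R ι) (N : Matrix ι ι R)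
    (v : ι → R) : v ⬝ᵥ (A * N * A) *ᵥ v = -((A *ᵥ v) ⬝ᵥ N *ᵥ (A *ᵥ v)) := by
  rw [← mulVec_mulVec, ← mulVec_mulVec, dotProduct_mulVec,
    vecMul_eq_neg_mulVec_of_mem_alternatingMatrices hA, neg_dotProduct]

end AlternatingMatrices

section UpperTriangle

variable {R ι : Type*} [CommRing R] [Fintype ι] [LinearOrder ι]

/-- The part of a matrix strictly above the diagonal; an alternating matrix is determined by it. -/
def strictUpper : Matrix ι ι R →ₗ[R] Matrix ι ι R where
  toFun A := of fun i j => if i < j then A i j else 0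
  map_add' A B := by ext i j; by_cases h : i < j <;> simp [h]
  map_smul' r A := by ext i j; by_cases h : i < j <;> simp [h]

theorem strictUpper_sub_transpose {A : Matrix ι ι R} (hA : A ∈ alternatingMatrices R ι) :
    strictUpper A - (strictUpper A)ᵀ = A := by
  ext i j
  rcases lt_trichotomy i j with h | rfl | h
  · simp [strictUpper, h, h.not_gt]
  · simp [strictUpper, diag_eq_zero_of_mem_alternatingMatrices hA]
  · have : A i j = -A j i :=
      congrFun (congrFun (transpose_eq_neg_of_mem_alternatingMatrices hA) j) i
    simp [strictUpper, h, h.not_gt, this]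

/-- The projection of the module of matrices onto its submodule of alternating matrices. -/
def alternatingProjection : Matrix ι ι R →ₗ[R] alternatingMatrices R ι :=
  (strictUpper - (transposeLinearEquiv ι ι R R).toLinearMap ∘ₗ strictUpper).codRestrict _
    fun A => sub_transpose_mem_alternatingMatrices (strictUpper A)

theorem alternatingProjection_comp_subtype :
    alternatingProjection ∘ₗ (alternatingMatrices R ι).subtype = LinearMap.id :=
  LinearMap.ext fun A => Subtype.ext (strictUpper_sub_transpose A.2)

instance projective_alternatingMatrices : Module.Projective R (alternatingMatrices R ι) :=
  Module.Projective.of_split _ _ alternatingProjection_comp_subtype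

instance projective_quotient_alternatingMatrices :
    Module.Projective R (Matrix ι ι R ⧸ alternatingMatrices R ι) := by
  let s : Matrix ι ι R →ₗ[R] Matrix ι ι R :=
    LinearMap.id - (alternatingMatrices R ι).subtype ∘ₗ alternatingProjection
  have hs : alternatingMatrices R ι ≤ LinearMap.ker s := fun A hA => by
    have := LinearMap.congr_fun alternatingProjection_comp_subtype ⟨A, hA⟩
    exact sub_eq_zero.2 (congrArg Subtype.val this).symm
  refine Module.Projective.of_split (Submodule.liftQ _ s hs) (Submodule.mkQ _)
    (Submodule.linearMap_qext _ (LinearMap.ext fun A => ?_))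
  simp [s]

end UpperTriangle

section AlternatingResolution

variable {R ι : Type*} [CommRing R] [Fintype ι]

/-- The self-dual complex `0 → R → Rⁿ → Rⁿ → R` of Buchsbaum and Eisenbud, whose middle map is an
alternating matrix `Φ` and whose outer maps are given by the same vector `x`, is exact at both
copies of `Rⁿ`. -/
structure IsAlternatingResolution (Φ : Matrix ι ι R) (x : ι → R) : Prop where
  mem_alternatingMatrices : Φ ∈ alternatingMatrices R ι
  exact_mulVec_dotProduct : Function.Exact Φ.mulVec (x ⬝ᵥ ·)
  exact_smul_mulVec : Function.Exact (fun r : R => r • x) Φ.mulVec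

variable {Φ : Matrix ι ι R} {x : ι → R} {a b : R}

namespace IsAlternatingResolution

theorem mulVec_eq_zero (h : IsAlternatingResolution Φ x) : Φ *ᵥ x = 0 := by
  simpa using h.exact_smul_mulVec.apply_apply_eq_zero 1

theorem exists_mul_eq (h : IsAlternatingResolution Φ x) {Y : Matrix ι ι R} (hY : x ᵥ* Y = 0) :
    ∃ N, Φ * N = Y := by
  choose w hw using fun j => (h.exact_mulVec_dotProduct (Y.col j)).1 (congrFun hY j)
  exact ⟨(of w)ᵀ, Matrix.ext fun i j => congrFun (hw j) i⟩

theorem exists_vecMulVec_eq (h : IsAlternatingResolution Φ x) {Y : Matrix ι ι R}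
    (hY : Φ * Y = 0) : ∃ z, vecMulVec x z = Y := by
  choose z hz using fun j => (h.exact_smul_mulVec (Y.col j)).1
    (funext fun i => congrFun (congrFun hY i) j)
  exact ⟨z, Matrix.ext fun i j => by simpa [vecMulVec_apply, mul_comm] using congrFun (hz j) i⟩

theorem eq_zero_of_mul_eq_zero (h : IsAlternatingResolution Φ x) {α : ι → R}
    (hα : IsSMulRegular R (x ⬝ᵥ α)) {A : Matrix ι ι R} (hA : A ∈ alternatingMatrices R ι)
    (hΦA : Φ * A = 0) : A = 0 := by
  obtain ⟨z, rfl⟩ := h.exists_vecMulVec_eq hΦA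
  have hz : ∀ v, (x ⬝ᵥ v) * (z ⬝ᵥ v) = 0 := fun v => by
    simpa [vecMulVec_mulVec, dotProduct_comm v x, mul_comm] using hA v
  have hzα : z ⬝ᵥ α = 0 := hα.right_eq_zero_of_smul (hz α)
  have hz0 : ∀ v, z ⬝ᵥ v = 0 := fun v => hα.right_eq_zero_of_smul (by
    have := hz (v + α)
    rw [dotProduct_add, dotProduct_add, hzα, add_zero, add_mul, hz v, zero_add] at this
    exact this)
  rw [dotProduct_eq_zero z hz0]
  ext
  simp [vecMulVec_apply]

theorem vecMul_eq_zero (h : IsAlternatingResolution Φ x) : x ᵥ* Φ = 0 := by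
  rw [vecMul_eq_neg_mulVec_of_mem_alternatingMatrices h.mem_alternatingMatrices, h.mulVec_eq_zero,
    neg_zero]

theorem eq_zero_of_smul_one_add_mul_eq_zero [DecidableEq ι]
    (h : IsAlternatingResolution Φ x) {α : ι → R} (hα : IsSMulRegular R (x ⬝ᵥ α))
    {r : R} {A : Matrix ι ι R} (hA : A ∈ alternatingMatrices R ι)
    (hrA : r • (1 : Matrix ι ι R) + Φ * A = 0) :
    r = 0 ∧ A = 0 := by
  have hrx : r • x = 0 := by
    have := congrArg (x ᵥ* ·) hrA
    simpa [vecMul_add, vecMul_smul, ← vecMul_vecMul, h.vecMul_eq_zero] using this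
  have hr : r = 0 := hα.right_eq_zero_of_smul (by
    rw [smul_eq_mul, mul_comm, ← smul_eq_mul, ← smul_dotProduct, hrx, zero_dotProduct])
  subst hr
  exact ⟨rfl, h.eq_zero_of_mul_eq_zero hα hA (by simpa using hrA)⟩

theorem dotProduct_mulVec_eq_zero (h : IsAlternatingResolution Φ x) {N : Matrix ι ι R}
    (hN : Φ * N * Φ ∈ alternatingMatrices R ι) {u : ι → R} (hu : x ⬝ᵥ u = 0) :
    u ⬝ᵥ N *ᵥ u = 0 := by
  obtain ⟨w, rfl⟩ := (h.exact_mulVec_dotProduct u).1 hu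
  rw [← neg_eq_zero, ← dotProduct_mul_mul_mulVec h.mem_alternatingMatrices]
  exact hN w

/- Expand the quadratic form of `N` at `(x ⬝ᵥ α) • v - (x ⬝ᵥ v) • α`, which `x` annihilates, and
cancel `x ⬝ᵥ α`. -/
theorem exists_smul_eq_mul (h : IsAlternatingResolution Φ x) {α β : ι → R}
    (hαβ : IsWeaklyRegular R [x ⬝ᵥ α, x ⬝ᵥ β]) {N : Matrix ι ι R}
    (hN : Φ * N * Φ ∈ alternatingMatrices R ι) :
    ∃ ℓ : ι → R, ∀ v, (x ⬝ᵥ α) * (v ⬝ᵥ N *ᵥ v) = (x ⬝ᵥ v) * (ℓ ⬝ᵥ v) := by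
  set a := x ⬝ᵥ α with ha
  have hexpand (v) : a ^ 2 * (v ⬝ᵥ N *ᵥ v) - a * (x ⬝ᵥ v) * (v ⬝ᵥ N *ᵥ α + α ⬝ᵥ N *ᵥ v)
      + (x ⬝ᵥ v) ^ 2 * (α ⬝ᵥ N *ᵥ α) = 0 := by
    have := h.dotProduct_mulVec_eq_zero hN (u := a • v - (x ⬝ᵥ v) • α) (by
      rw [dotProduct_sub, dotProduct_smul, dotProduct_smul, ← ha, smul_eq_mul, smul_eq_mul,
        mul_comm, sub_self])
    simp only [mulVec_sub, mulVec_smul, dotProduct_sub, sub_dotProduct, dotProduct_smul,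
      smul_dotProduct, smul_eq_mul] at this
    linear_combination this
  obtain ⟨k', hk'⟩ := exists_eq_smul_of_isWeaklyRegular_pair hαβ
    (u := (x ⬝ᵥ β) * (α ⬝ᵥ N *ᵥ α))
    (v := (x ⬝ᵥ β) * (β ⬝ᵥ N *ᵥ α + α ⬝ᵥ N *ᵥ β) - a * (β ⬝ᵥ N *ᵥ β)) (by
      simp only [smul_eq_mul]
      linear_combination hexpand β)
  obtain ⟨k, hk⟩ := exists_eq_smul_of_isWeaklyRegular_pair hαβ hk'
  refine ⟨N *ᵥ α + α ᵥ* N - k • x, fun v =>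
    ((isWeaklyRegular_cons_iff R _ _).1 hαβ).1 ?_⟩
  have hk2 : α ⬝ᵥ N *ᵥ α = a * k := hk
  simp only [sub_dotProduct, add_dotProduct, smul_dotProduct, ← dotProduct_mulVec,
    dotProduct_comm (N *ᵥ α) v, smul_eq_mul]
  linear_combination hexpand v - (x ⬝ᵥ v) ^ 2 * hk2

theorem exists_sub_vecMulVec_mem (h : IsAlternatingResolution Φ x) {α β : ι → R}
    (hαβ : IsWeaklyRegular R [x ⬝ᵥ α, x ⬝ᵥ β]) {N : Matrix ι ι R}
    (hN : Φ * N * Φ ∈ alternatingMatrices R ι) :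
    ∃ y, N - vecMulVec x y ∈ alternatingMatrices R ι := by
  classical
  have hreg : IsSMulRegular R (x ⬝ᵥ α) := ((isWeaklyRegular_cons_iff R _ _).1 hαβ).1
  obtain ⟨ℓ, hℓ⟩ := h.exists_smul_eq_mul hαβ hN
  obtain ⟨s, hs⟩ : ∃ s, ℓ ⬝ᵥ β = (x ⬝ᵥ α) • s :=
    exists_eq_smul_of_isWeaklyRegular_pair hαβ (hℓ β).symm
  have hdvd (v) : ∃ t, ℓ ⬝ᵥ v = (x ⬝ᵥ α) • t :=
    exists_eq_smul_of_isWeaklyRegular_pair hαβ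
      (v := v ⬝ᵥ N *ᵥ β + β ⬝ᵥ N *ᵥ v - (x ⬝ᵥ v) * s) (by
        have := hℓ (v + β)
        simp only [mulVec_add, dotProduct_add, add_dotProduct] at this
        rw [smul_eq_mul] at hs
        simp only [smul_eq_mul]
        linear_combination -this + hℓ v + hℓ β - (x ⬝ᵥ v) * hs)
  choose y hy using fun i => hdvd (Pi.single i 1)
  have hℓy : ℓ = (x ⬝ᵥ α) • y := funext fun i => by simpa using hy i
  refine ⟨y, fun v => hreg ?_⟩
  have := hℓ v
  simp only [hℓy, smul_dotProduct, smul_eq_mul] at this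
  simp only [sub_mulVec, dotProduct_sub, vecMulVec_mulVec, op_smul_eq_smul, dotProduct_smul,
    dotProduct_comm v x, smul_eq_mul]
  linear_combination this

theorem exists_eq_smul_one_add_mul [DecidableEq ι] (h : IsAlternatingResolution Φ x)
    {α β : ι → R} (hαβ : IsWeaklyRegular R [x ⬝ᵥ α, x ⬝ᵥ β]) {Y : Matrix ι ι R}
    (hY : Y * Φ ∈ alternatingMatrices R ι) :
    ∃ r : R, ∃ A ∈ alternatingMatrices R ι, r • 1 + Φ * A = Y := by
  obtain ⟨r, hr⟩ := (h.exact_smul_mulVec (x ᵥ* Y)).1 (by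
    rw [← neg_eq_zero, ← vecMul_eq_neg_mulVec_of_mem_alternatingMatrices h.mem_alternatingMatrices,
      vecMul_vecMul, vecMul_eq_neg_mulVec_of_mem_alternatingMatrices hY, ← mulVec_mulVec,
      h.mulVec_eq_zero, mulVec_zero, neg_zero])
  obtain ⟨N, hN⟩ := h.exists_mul_eq (Y := Y - r • 1) (by
    rw [vecMul_sub, vecMul_smul, vecMul_one, ← hr, sub_self])
  obtain ⟨y, hy⟩ := h.exists_sub_vecMulVec_mem hαβ (N := N) (by
    rw [hN, sub_mul, Matrix.smul_mul, one_mul]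
    exact sub_mem hY (Submodule.smul_mem _ r h.mem_alternatingMatrices))
  refine ⟨r, _, hy, ?_⟩
  rw [mul_sub, mul_vecMulVec, h.mulVec_eq_zero, zero_vecMulVec, sub_zero, hN, add_sub_cancel]

theorem smul_one_add_mul_mul_mem [DecidableEq ι] (h : IsAlternatingResolution Φ x) (r : R)
    {A : Matrix ι ι R} (hA : A ∈ alternatingMatrices R ι) :
    (r • 1 + Φ * A) * Φ ∈ alternatingMatrices R ι := by
  rw [add_mul, Matrix.smul_mul, one_mul]
  refine add_mem (Submodule.smul_mem _ r h.mem_alternatingMatrices) fun v => ?_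
  rw [dotProduct_mul_mul_mulVec h.mem_alternatingMatrices, hA, neg_zero]

theorem exists_smul_sub_mul_mem (h : IsAlternatingResolution Φ x) (α : ι → R) {T : Matrix ι ι R}
    (hT : x ⬝ᵥ T *ᵥ x = 0) : ∃ Y, (x ⬝ᵥ α) • T - Y * Φ ∈ alternatingMatrices R ι := by
  classical
  have hΦ := h.mem_alternatingMatrices
  obtain ⟨M, hM⟩ := h.exists_mul_eq (Y := (x ⬝ᵥ α) • 1 - vecMulVec α x) (by
    rw [vecMul_sub, vecMul_smul, vecMul_one, vecMul_vecMulVec, sub_self])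
  obtain ⟨n, hn⟩ := (h.exact_mulVec_dotProduct (x ᵥ* T)).1
    (show x ⬝ᵥ (x ᵥ* T) = 0 by rwa [dotProduct_comm, ← dotProduct_mulVec])
  have hxT : x ᵥ* T = -(n ᵥ* Φ) := by
    rw [← hn, vecMul_eq_neg_mulVec_of_mem_alternatingMatrices hΦ, neg_neg]
  have hT' : (x ⬝ᵥ α) • T = Φ * (M * T) - vecMulVec α (n ᵥ* Φ) := by
    rw [← Matrix.mul_assoc, hM, Matrix.sub_mul, Matrix.smul_mul, Matrix.one_mul, vecMulVec_mul,
      hxT, vecMulVec_neg, sub_neg_eq_add, add_sub_cancel_right]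
  refine ⟨-(M * T)ᵀ - vecMulVec α n, ?_⟩
  convert sub_transpose_mem_alternatingMatrices (Φ * (M * T)) using 1
  rw [hT', transpose_mul Φ, transpose_eq_neg_of_mem_alternatingMatrices hΦ, Matrix.sub_mul,
    vecMulVec_mul, Matrix.neg_mul, Matrix.mul_neg]
  abel

end IsAlternatingResolution

end AlternatingResolution

open scoped TensorProduct

section TensorOfMatrix

variable {R M ι : Type*} [CommRing R] [AddCommGroup M] [Module R M] [Fintype ι]

/-- The tensor `∑ i j, T i j • (X i ⊗ X j)` with coefficient matrix `T` with respect to a finite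
family `X` of vectors. -/
def tensorOfMatrix (X : ι → M) : Matrix ι ι R →ₗ[R] M ⊗[R] M where
  toFun T := ∑ i, ∑ j, T i j • (X i ⊗ₜ X j)
  map_add' T U := by simp [add_smul, Finset.sum_add_distrib]
  map_smul' r T := by simp [Finset.smul_sum, smul_smul]

theorem tensorOfMatrix_apply (X : ι → M) (T : Matrix ι ι R) :
    tensorOfMatrix X T = ∑ i, ∑ j, T i j • (X i ⊗ₜ[R] X j) := rfl

theorem tensorOfMatrix_vecMulVec (X : ι → M) (p q : ι → R) :
    tensorOfMatrix X (vecMulVec p q) = (∑ i, p i • X i) ⊗ₜ (∑ j, q j • X j) := by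
  simp only [tensorOfMatrix_apply, TensorProduct.sum_tmul, TensorProduct.tmul_sum,
    TensorProduct.smul_tmul_smul, vecMulVec_apply]
  exact Finset.sum_comm

theorem tensorOfMatrix_surjective {X : ι → M} (hX : Submodule.span R (Set.range X) = ⊤) :
    Function.Surjective (tensorOfMatrix (R := R) X) := by
  have hcomb (u : M) : ∃ p : ι → R, ∑ i, p i • X i = u :=
    (Submodule.mem_span_range_iff_exists_fun R).1 (hX ▸ Submodule.mem_top)
  rw [← LinearMap.range_eq_top, eq_top_iff, ← TensorProduct.span_tmul_eq_top, Submodule.span_le]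
  rintro _ ⟨u, v, rfl⟩
  obtain ⟨p, rfl⟩ := hcomb u
  obtain ⟨q, rfl⟩ := hcomb v
  exact ⟨vecMulVec p q, tensorOfMatrix_vecMulVec X p q⟩

theorem tensorOfMatrix_mul_eq_zero {X : ι → M} {Φ : Matrix ι ι R}
    (hΦ : ∀ i, ∑ j, Φ i j • X j = 0) (Y : Matrix ι ι R) : tensorOfMatrix X (Y * Φ) = 0 := by
  refine Finset.sum_eq_zero fun i _ => ?_
  have hYΦ : ∑ j, (Y * Φ) i j • X j = ∑ k, Y i k • ∑ j, Φ k j • X j := by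
    simp only [mul_apply, Finset.sum_smul, Finset.smul_sum, smul_smul]
    exact Finset.sum_comm
  simp only [← TensorProduct.tmul_smul, ← TensorProduct.tmul_sum, hYΦ, hΦ, smul_zero,
    Finset.sum_const_zero, TensorProduct.tmul_zero]

theorem tensorOfMatrix_sub_transpose_mem_span (X : ι → M) (Z : Matrix ι ι R) :
    tensorOfMatrix X (Z - Zᵀ) ∈
      Submodule.span R {w : M ⊗[R] M | ∃ a b : M, w = b ⊗ₜ a - a ⊗ₜ b} := by
  have hZ : tensorOfMatrix X Zᵀ = ∑ i, ∑ j, Z i j • (X j ⊗ₜ[R] X i) := Finset.sum_comm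
  rw [map_sub, hZ, tensorOfMatrix_apply]
  simp only [← Finset.sum_sub_distrib, ← smul_sub]
  exact sum_mem fun i _ => sum_mem fun j _ =>
    Submodule.smul_mem _ _ (Submodule.subset_span ⟨X j, X i, rfl⟩)

theorem mulMap_tensorOfMatrix {I : Ideal R} (X : ι → I) (T : Matrix ι ι R) :
    Submodule.mulMap I I (tensorOfMatrix X T) =
      (fun i => (X i : R)) ⬝ᵥ T *ᵥ fun i => (X i : R) := by
  simp only [tensorOfMatrix_apply, map_sum, map_smul, Submodule.mulMap_tmul, smul_eq_mul,
    dotProduct, mulVec, Finset.mul_sum]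
  exact Finset.sum_congr rfl fun i _ => Finset.sum_congr rfl fun j _ => by ring

end TensorOfMatrix

section Syzygetic

variable {R ι : Type*} [CommRing R] [Fintype ι] [LinearOrder ι] {Φ : Matrix ι ι R} {x : ι → R}
  {a b c : R}

/- The symmetric square of `I = (x)` is the cokernel of the second map of the exact complex
`0 → R × Alt → Mat → Mat ⧸ Alt`, given by `(r, A) ↦ r + Φ A` and `Y ↦ Y Φ`. A relation `T` is
annihilated by `I` in this cokernel, hence zero there because the complex is so short. -/
theorem IsAlternatingResolution.exists_sub_mul_mem (h : IsAlternatingResolution Φ x)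
    (habc : IsWeaklyRegular R [a, b, c]) (ha : a ∈ Ideal.span (Set.range x))
    (hb : b ∈ Ideal.span (Set.range x)) (hc : c ∈ Ideal.span (Set.range x)) {T : Matrix ι ι R}
    (hT : x ⬝ᵥ T *ᵥ x = 0) : ∃ Y, T - Y * Φ ∈ alternatingMatrices R ι := by
  have hdot {s : R} (hs : s ∈ Ideal.span (Set.range x)) : ∃ α, x ⬝ᵥ α = s := by
    obtain ⟨α, hα⟩ := Ideal.mem_span_range_iff_exists_fun.1 hs
    exact ⟨α, by rw [dotProduct_comm, ← hα, dotProduct]⟩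
  obtain ⟨α, rfl⟩ := hdot ha
  obtain ⟨β, rfl⟩ := hdot hb
  obtain ⟨γ, rfl⟩ := hdot hc
  have hαβ : IsWeaklyRegular R [x ⬝ᵥ α, x ⬝ᵥ β] :=
    ((isWeaklyRegular_append_iff R [x ⬝ᵥ α, x ⬝ᵥ β] [x ⬝ᵥ γ]).1 habc).1
  have hα : IsSMulRegular R (x ⬝ᵥ α) := ((isWeaklyRegular_cons_iff R _ _).1 hαβ).1
  let f : R × alternatingMatrices R ι →ₗ[R] Matrix ι ι R :=
    (LinearMap.toSpanSingleton R _ 1).coprod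
      (LinearMap.mulLeft R Φ ∘ₗ (alternatingMatrices R ι).subtype)
  let g : Matrix ι ι R →ₗ[R] Matrix ι ι R ⧸ alternatingMatrices R ι :=
    Submodule.mkQ _ ∘ₗ LinearMap.mulRight R Φ
  have hf : Function.Injective f := (injective_iff_map_eq_zero f).2 fun ⟨r, A⟩ hrA => by
    obtain ⟨hr, hA⟩ := h.eq_zero_of_smul_one_add_mul_eq_zero hα A.2 hrA
    exact Prod.ext hr (Subtype.ext hA)
  have hfg : Function.Exact f g := fun Y => by
    constructor
    · intro hY
      obtain ⟨r, A, hA, hrA⟩ :=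
        h.exists_eq_smul_one_add_mul hαβ ((Submodule.Quotient.mk_eq_zero _).1 hY)
      exact ⟨(r, ⟨A, hA⟩), hrA⟩
    · rintro ⟨⟨r, A, hA⟩, rfl⟩
      exact (Submodule.Quotient.mk_eq_zero _).2 (h.smul_one_add_mul_mul_mem r hA)
  have hg {α : ι → R} : (x ⬝ᵥ α) • Submodule.Quotient.mk T ∈ LinearMap.range g := by
    obtain ⟨Y, hY⟩ := h.exists_smul_sub_mul_mem α hT
    exact ⟨Y, ((Submodule.Quotient.eq _).2 hY).symm⟩
  obtain ⟨Y, hY⟩ := mem_range_of_smul_mem_range_of_exact (isWeaklyRegular_of_flat habc)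
    (isWeaklyRegular_of_flat hαβ)
    ((isWeaklyRegular_cons_iff _ _ _).1 (isWeaklyRegular_of_flat hαβ)).1 hf hfg hg hg hg
  exact ⟨Y, (Submodule.Quotient.eq _).1 hY.symm⟩

theorem IsAlternatingResolution.isSyzygetic (h : IsAlternatingResolution Φ x)
    (habc : IsWeaklyRegular R [a, b, c]) (ha : a ∈ Ideal.span (Set.range x))
    (hb : b ∈ Ideal.span (Set.range x)) (hc : c ∈ Ideal.span (Set.range x)) :
    (Ideal.span (Set.range x)).IsSyzygetic := by
  set I := Ideal.span (Set.range x)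
  refine ⟨Submodule.mulMap_range I I, le_antisymm (fun w hw => ?_) (Submodule.span_le.2 ?_)⟩
  · let X : ι → I := fun i => ⟨x i, Ideal.subset_span ⟨i, rfl⟩⟩
    have hX : Submodule.span R (Set.range X) = ⊤ := by
      apply Submodule.map_injective_of_injective I.injective_subtype
      rw [Submodule.map_span, ← Set.range_comp, Submodule.map_top, Submodule.range_subtype]
      rfl
    have hΦX (i : ι) : ∑ j, Φ i j • X j = 0 := Subtype.ext (by
      simpa [X, mulVec, dotProduct] using congrFun h.mulVec_eq_zero i)
    obtain ⟨T, rfl⟩ := tensorOfMatrix_surjective hX w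
    obtain ⟨Y, hY⟩ := h.exists_sub_mul_mem habc ha hb hc (T := T)
      ((mulMap_tensorOfMatrix X T).symm.trans hw)
    rw [← sub_add_cancel T (Y * Φ), map_add, tensorOfMatrix_mul_eq_zero hΦX, add_zero,
      ← strictUpper_sub_transpose hY]
    exact tensorOfMatrix_sub_transpose_mem_span X _
  · rintro _ ⟨u, v, rfl⟩
    simp [mul_comm]

end Syzygetic

/-! ### Self-duality of Gorenstein resolutions -/

section Lifting

variable {R P M N : Type*} [CommRing R] [AddCommGroup P] [Module R P] [Module.Projective R P]
  [AddCommGroup M] [Module R M] [AddCommGroup N] [Module R N]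

theorem exists_comp_eq_of_range_le {f : P →ₗ[R] N} {g : M →ₗ[R] N}
    (h : LinearMap.range f ≤ LinearMap.range g) : ∃ k : P →ₗ[R] M, g ∘ₗ k = f := by
  obtain ⟨k, hk⟩ := Module.projective_lifting_property g.rangeRestrict
    (f.codRestrict _ fun x => h ⟨x, rfl⟩) g.surjective_rangeRestrict
  exact ⟨k, LinearMap.ext fun x => congrArg Subtype.val (LinearMap.congr_fun hk x)⟩

end Lifting

section Dual

variable {R F G : Type*} [CommRing R] [AddCommGroup F] [Module R F] [AddCommGroup G] [Module R G]
  {d : F →ₗ[R] R} {a : R}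

theorem isSMulRegular_dual (ha : IsSMulRegular R a) :
    IsSMulRegular (Module.Dual R F) a := fun _ _ hl =>
  LinearMap.ext fun f => ha (LinearMap.congr_fun hl f)

theorem injective_toSpanSingleton (ha : IsSMulRegular R a) (had : a ∈ LinearMap.range d) :
    Function.Injective (LinearMap.toSpanSingleton R (Module.Dual R F) d) := by
  obtain ⟨f, rfl⟩ := had
  intro r s hrs
  apply ha
  simpa [mul_comm] using LinearMap.congr_fun hrs f

theorem dualMap_mem_smul_top [Module.Free R G] [Module.Finite R G] {φ : G →ₗ[R] F} {J : Ideal R}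
    (hJ : ∀ g, φ g ∈ J • (⊤ : Submodule R F)) (l : Module.Dual R F) :
    φ.dualMap l ∈ J • (⊤ : Submodule R (Module.Dual R G)) := by
  classical
  let e := Module.Free.chooseBasis R G
  rw [← e.sum_dual_apply_smul_coord (φ.dualMap l)]
  refine Submodule.sum_mem _ fun i _ => Submodule.smul_mem_smul ?_ trivial
  have := Submodule.mem_map_of_mem (f := l) (hJ (e i))
  rw [Submodule.map_smul''] at this
  exact Ideal.mul_le_left this

theorem exists_basis_pairing_eq_dotProduct {ι : Type*} [Fintype ι] {p : F →ₗ[R] G →ₗ[R] R}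
    [p.IsPerfPair] (e : Module.Basis ι R F) :
    ∃ γ : Module.Basis ι R G, ∀ f g, p f g = e.repr f ⬝ᵥ γ.repr g := by
  classical
  refine ⟨e.dualBasis.map p.flip.toPerfPair.symm, fun f g => ?_⟩
  conv_lhs => rw [← e.sum_repr f, map_sum, LinearMap.sum_apply]
  simp [dotProduct]

end Dual

section GorensteinResolution

variable {R F G : Type*} [CommRing R] [AddCommGroup F] [Module R F] [AddCommGroup G] [Module R G]

/-- The complex `0 → R → G → F → R` with maps `ψ`, `φ`, `d` is exact at `R` (on the left), `G` and
`F`, i.e. it resolves `R ⧸ range d`. For finite free `F` and `G` this is the shape of the minimal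
resolution of a Gorenstein quotient of projective dimension three. -/
structure IsGorensteinResolution (ψ : R →ₗ[R] G) (φ : G →ₗ[R] F) (d : F →ₗ[R] R) : Prop where
  injective : Function.Injective ψ
  exact_left : Function.Exact ψ φ
  exact_right : Function.Exact φ d

namespace IsGorensteinResolution

variable {ψ : R →ₗ[R] G} {φ : G →ₗ[R] F} {d : F →ₗ[R] R} {a b c : R}

theorem exists_map_eq_smul_sub_smul (h : IsGorensteinResolution ψ φ d) (f f' : F) :
    ∃ g, φ g = d f • f' - d f' • f :=
  (h.exact_right _).1 (by simp [mul_comm])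

theorem smul_dual_mem (h : IsGorensteinResolution ψ φ d) (ha : a ∈ LinearMap.range d)
    {l : Module.Dual R F} (hl : l ∘ₗ φ = 0) :
    a • l ∈ LinearMap.range (LinearMap.toSpanSingleton R (Module.Dual R F) d) := by
  obtain ⟨fa, rfl⟩ := ha
  refine ⟨l fa, LinearMap.ext fun f => ?_⟩
  obtain ⟨g, hg⟩ := h.exists_map_eq_smul_sub_smul fa f
  have hlg : l (φ g) = 0 := LinearMap.congr_fun hl g
  rw [hg, map_sub, map_smul, map_smul, sub_eq_zero] at hlg
  simpa [mul_comm] using hlg.symm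

theorem exists_smul_eq (h : IsGorensteinResolution ψ φ d) (hab : IsWeaklyRegular R [a, b])
    (ha : a ∈ LinearMap.range d) (hb : b ∈ LinearMap.range d) {l : Module.Dual R F}
    (hl : l ∘ₗ φ = 0) : ∃ r : R, r • d = l :=
  have hreg : IsSMulRegular R a := ((isWeaklyRegular_cons_iff R _ _).1 hab).1
  mem_range_of_smul_mem_range_of_injective hab (isSMulRegular_dual hreg)
    (injective_toSpanSingleton hreg ha) (h.smul_dual_mem ha hl) (h.smul_dual_mem hb hl)

theorem exact_dualMap (h : IsGorensteinResolution ψ φ d) (hab : IsWeaklyRegular R [a, b])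
    (ha : a ∈ LinearMap.range d) (hb : b ∈ LinearMap.range d) :
    Function.Exact (LinearMap.toSpanSingleton R (Module.Dual R F) d) φ.dualMap := fun l => by
  refine ⟨fun hl => h.exists_smul_eq hab ha hb hl, ?_⟩
  rintro ⟨r, rfl⟩
  ext g
  simp [h.exact_right.apply_apply_eq_zero g]

section DualExactness

variable [Module.Projective R F]

theorem smul_mem_range_dualMap (h : IsGorensteinResolution ψ φ d)
    (ha : a ∈ LinearMap.range d) {γ : Module.Dual R G} (hγ : γ (ψ 1) = 0) :
    a • γ ∈ LinearMap.range φ.dualMap := by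
  obtain ⟨f, rfl⟩ := ha
  obtain ⟨k, hk⟩ := exists_comp_eq_of_range_le (f := d f • LinearMap.id - d.smulRight f) (g := φ)
    (by
      rintro _ ⟨f', rfl⟩
      exact h.exists_map_eq_smul_sub_smul f f')
  refine ⟨γ ∘ₗ k, LinearMap.ext fun g => ?_⟩
  obtain ⟨r, hr⟩ := (h.exact_left (k (φ g) - d f • g)).1 (by
    rw [map_sub, map_smul, ← LinearMap.comp_apply, hk]
    simp [h.exact_right.apply_apply_eq_zero g])
  have hγr : γ (ψ r) = 0 := by
    rw [← mul_one r, ← smul_eq_mul, map_smul, map_smul, hγ, smul_zero]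
  rwa [hr, map_sub, sub_eq_zero, map_smul] at hγr

variable [Module.Finite R F]

theorem mem_range_dualMap (h : IsGorensteinResolution ψ φ d) (habc : IsWeaklyRegular R [a, b, c])
    (ha : a ∈ LinearMap.range d) (hb : b ∈ LinearMap.range d) (hc : c ∈ LinearMap.range d)
    {γ : Module.Dual R G} (hγ : γ (ψ 1) = 0) : γ ∈ LinearMap.range φ.dualMap :=
  have hab : IsWeaklyRegular R [a, b] := ((isWeaklyRegular_append_iff R [a, b] [c]).1 habc).1
  have hreg : IsSMulRegular R a := ((isWeaklyRegular_cons_iff R _ _).1 hab).1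
  mem_range_of_smul_mem_range_of_exact habc (isWeaklyRegular_of_flat hab)
    (isSMulRegular_dual hreg) (injective_toSpanSingleton hreg ha) (h.exact_dualMap hab ha hb)
    (h.smul_mem_range_dualMap ha hγ) (h.smul_mem_range_dualMap hb hγ)
    (h.smul_mem_range_dualMap hc hγ)

variable [Module.Projective R G] [Module.Finite R G]

/- Since the dual complex is exact, multiplication by `γ (ψ 1)` on it is null-homotopic; the last
component of a homotopy is evaluation at some `f`, and `d f = γ (ψ 1)`. -/
theorem apply_mem_range (h : IsGorensteinResolution ψ φ d) (habc : IsWeaklyRegular R [a, b, c])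
    (ha : a ∈ LinearMap.range d) (hb : b ∈ LinearMap.range d) (hc : c ∈ LinearMap.range d)
    (γ : Module.Dual R G) : γ (ψ 1) ∈ LinearMap.range d := by
  have hab : IsWeaklyRegular R [a, b] := ((isWeaklyRegular_append_iff R [a, b] [c]).1 habc).1
  have hreg : IsSMulRegular R a := ((isWeaklyRegular_cons_iff R _ _).1 hab).1
  obtain ⟨k₂, hk₂⟩ := exists_comp_eq_of_range_le (g := φ.dualMap)
    (f := γ (ψ 1) • LinearMap.id - (Module.Dual.eval R G (ψ 1)).smulRight γ) (by
      rintro _ ⟨β, rfl⟩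
      exact h.mem_range_dualMap habc ha hb hc (by simp [mul_comm]))
  obtain ⟨k₁, hk₁⟩ := exists_comp_eq_of_range_le
    (g := LinearMap.toSpanSingleton R (Module.Dual R F) d)
    (f := γ (ψ 1) • LinearMap.id - k₂ ∘ₗ φ.dualMap) (by
      rintro _ ⟨l, rfl⟩
      refine h.exists_smul_eq hab ha hb (LinearMap.ext fun g => ?_)
      have := LinearMap.congr_fun (LinearMap.congr_fun hk₂ (φ.dualMap l)) g
      have hφψ : φ (ψ 1) = 0 := h.exact_left.apply_apply_eq_zero 1
      simp only [LinearMap.comp_apply, LinearMap.dualMap_apply, LinearMap.sub_apply,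
        LinearMap.smul_apply, LinearMap.smulRight_apply, LinearMap.id_apply,
        Module.Dual.eval_apply, hφψ, map_zero, zero_smul, sub_zero] at this
      simp [this])
  have hd : φ.dualMap d = 0 := LinearMap.ext h.exact_right.apply_apply_eq_zero
  have hk₁d : k₁ d = γ (ψ 1) := injective_toSpanSingleton hreg ha (by
    simpa [hd] using LinearMap.congr_fun hk₁ d)
  obtain ⟨f, rfl⟩ := (Module.evalEquiv R F).surjective k₁
  exact ⟨f, hk₁d⟩

end DualExactness

section Multiplication

variable [Module.Free R F]

/- `μ` is the component of degree one times degree one of the multiplication of a differential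
graded algebra structure on the resolution. -/
theorem exists_alternating_mul (h : IsGorensteinResolution ψ φ d) :
    ∃ μ : F →ₗ[R] F →ₗ[R] G,
      (∀ f, μ f f = 0) ∧ ∀ f f', φ (μ f f') = d f • f' - d f' • f := by
  let e := Module.Free.chooseBasis R F
  obtain ⟨_, -⟩ := exists_wellFoundedLT (Module.Free.ChooseBasisIndex R F)
  choose m hm using fun i j => h.exists_map_eq_smul_sub_smul (e i) (e j)
  let β : F →ₗ[R] F →ₗ[R] G := e.constr R fun i => e.constr R fun j => if i < j then m i j else 0
  have hβ (i j) : β (e i) (e j) = if i < j then m i j else 0 := by simp [β]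
  let ν : F →ₗ[R] F →ₗ[R] F := LinearMap.lsmul R F ∘ₗ d - (LinearMap.lsmul R F ∘ₗ d).flip
  have hν : (β - β.flip).compr₂ φ = ν := e.ext fun i => e.ext fun j => by
    simp only [LinearMap.compr₂_apply, LinearMap.sub_apply, LinearMap.flip_apply, hβ]
    rcases lt_trichotomy i j with hij | rfl | hij
    · simp [hij, hij.not_gt, hm, ν]
    · simp [ν]
    · simp [hij, hij.not_gt, hm, ν]
  exact ⟨β - β.flip, fun f => by simp, LinearMap.congr_fun₂ hν⟩

theorem exists_pairing (h : IsGorensteinResolution ψ φ d) :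
    ∃ p : F →ₗ[R] G →ₗ[R] R, (∀ f, p f (ψ 1) = d f) ∧ ∀ g, p (φ g) g = 0 := by
  obtain ⟨μ, hμ, hφμ⟩ := h.exists_alternating_mul
  let q : F →ₗ[R] G →ₗ[R] G := LinearMap.lsmul R G ∘ₗ d - μ.compl₂ φ
  have hq (f g) : q f g = d f • g - μ f (φ g) := rfl
  have hqψ (f g) : q f g ∈ LinearMap.range ψ := (h.exact_left _).1 (by
    rw [hq, map_sub, hφμ, map_smul, h.exact_right.apply_apply_eq_zero, zero_smul, sub_zero,
      sub_self])
  let p := LinearMap.codRestrict₂ q ψ h.injective hqψ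
  have hp (f g) : ψ (p f g) = d f • g - μ f (φ g) :=
    LinearMap.codRestrict₂_apply q ψ h.injective hqψ f g
  refine ⟨p, fun f => h.injective ?_, fun g => h.injective ?_⟩
  · rw [hp, h.exact_left.apply_apply_eq_zero, map_zero, sub_zero, ← map_smul, smul_eq_mul, mul_one]
  · rw [hp, hμ, h.exact_right.apply_apply_eq_zero, zero_smul, sub_zero, map_zero]

end Multiplication

section Perfect

variable {p : F →ₗ[R] G →ₗ[R] R}

theorem pairing_surjective [IsLocalRing R] [Module.Projective R F] [Module.Finite R F]
    [Module.Free R G] [Module.Finite R G] (h : IsGorensteinResolution ψ φ d)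
    (hφ : ∀ g, φ g ∈ IsLocalRing.maximalIdeal R • (⊤ : Submodule R F))
    (habc : IsWeaklyRegular R [a, b, c])
    (ha : a ∈ LinearMap.range d) (hb : b ∈ LinearMap.range d) (hc : c ∈ LinearMap.range d)
    (hpψ : ∀ f, p f (ψ 1) = d f) : Function.Surjective p := by
  rw [← LinearMap.range_eq_top, ← top_le_iff]
  refine Submodule.le_of_le_smul_of_le_jacobson_bot (I := IsLocalRing.maximalIdeal R)
    Module.Finite.fg_top (IsLocalRing.maximalIdeal_le_jacobson _) fun γ _ => ?_
  obtain ⟨f, hf⟩ := h.apply_mem_range habc ha hb hc γ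
  obtain ⟨l, hl⟩ := h.mem_range_dualMap habc ha hb hc (γ := γ - p f) (by simp [hpψ, hf])
  rw [← add_sub_cancel (p f) γ, ← hl]
  exact Submodule.add_mem_sup ⟨f, rfl⟩ (dualMap_mem_smul_top hφ l)

theorem pairing_injective [Module.Projective R G] (h : IsGorensteinResolution ψ φ d)
    (hab : IsWeaklyRegular R [a, b]) (ha : a ∈ LinearMap.range d) (hb : b ∈ LinearMap.range d)
    (hpψ : ∀ f, p f (ψ 1) = d f) (hpφ : ∀ g, p (φ g) g = 0) (hp : Function.Surjective p) :
    Function.Injective p := by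
  refine (injective_iff_map_eq_zero p).2 fun f hf => ?_
  obtain ⟨g, rfl⟩ := (h.exact_right f).1 (by rw [← hpψ, hf, LinearMap.zero_apply])
  obtain ⟨r, hr⟩ := h.exists_smul_eq hab ha hb (l := p.flip g) (LinearMap.ext fun g' => by
    have := hpφ (g + g')
    simpa [hpφ, hf] using this)
  have hg : g - ψ r = 0 := (Module.forall_dual_apply_eq_zero_iff R _).1 fun γ => by
    obtain ⟨f, rfl⟩ := hp γ
    have hrf : r * d f = p f g := LinearMap.congr_fun hr f
    rw [map_sub, ← hrf, ← hpψ, ← smul_eq_mul, ← map_smul, ← map_smul, smul_eq_mul, mul_one,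
      sub_self]
  rw [sub_eq_zero.1 hg, h.exact_left.apply_apply_eq_zero]

theorem isAlternatingResolution {ι : Type*} [Fintype ι] [DecidableEq ι]
    (h : IsGorensteinResolution ψ φ d) (e : Module.Basis ι R F) (γ : Module.Basis ι R G)
    (hp : ∀ f g, p f g = e.repr f ⬝ᵥ γ.repr g) (hpψ : ∀ f, p f (ψ 1) = d f)
    (hpφ : ∀ g, p (φ g) g = 0) :
    IsAlternatingResolution (LinearMap.toMatrix γ e φ) (γ.repr (ψ 1)) where
  mem_alternatingMatrices v := by
    obtain ⟨g, rfl⟩ := γ.equivFun.surjective v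
    rw [γ.equivFun_apply, LinearMap.toMatrix_mulVec_repr, dotProduct_comm, ← hp, hpφ]
  exact_mulVec_dotProduct v := by
    obtain ⟨f, rfl⟩ := e.equivFun.surjective v
    have hf : γ.repr (ψ 1) ⬝ᵥ e.equivFun f = d f := by
      rw [dotProduct_comm, e.equivFun_apply, ← hp, hpψ]
    simp only [hf, Set.mem_range, γ.equivFun.surjective.exists, γ.equivFun_apply,
      LinearMap.toMatrix_mulVec_repr, ← e.equivFun_apply, e.equivFun.injective.eq_iff]
    exact h.exact_right f
  exact_smul_mulVec v := by
    obtain ⟨g, rfl⟩ := γ.equivFun.surjective v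
    have hψ (r : R) : ψ r = r • ψ 1 := by rw [← map_smul, smul_eq_mul, mul_one]
    simp only [γ.equivFun_apply, LinearMap.toMatrix_mulVec_repr, Set.mem_range, ← Finsupp.coe_smul,
      ← map_smul, ← hψ, DFunLike.coe_fn_eq, γ.repr.injective.eq_iff, Finsupp.coe_eq_zero,
      e.repr.map_eq_zero_iff]
    exact h.exact_left g

theorem isSyzygetic [IsLocalRing R] [Module.Free R F] [Module.Finite R F]
    [Module.Free R G] [Module.Finite R G] (h : IsGorensteinResolution ψ φ d)
    (hφ : ∀ g, φ g ∈ IsLocalRing.maximalIdeal R • (⊤ : Submodule R F))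
    (habc : IsWeaklyRegular R [a, b, c]) (ha : a ∈ LinearMap.range d)
    (hb : b ∈ LinearMap.range d) (hc : c ∈ LinearMap.range d) :
    Ideal.IsSyzygetic (LinearMap.range d) := by
  obtain ⟨p, hpψ, hpφ⟩ := h.exists_pairing
  have hsurj := h.pairing_surjective hφ habc ha hb hc hpψ
  have hinj := h.pairing_injective ((isWeaklyRegular_append_iff R [a, b] [c]).1 habc).1 ha hb
    hpψ hpφ hsurj
  have := LinearMap.IsPerfPair.of_bijective p ⟨hinj, hsurj⟩
  let e := Module.finBasis R F
  obtain ⟨γ, hγ⟩ := exists_basis_pairing_eq_dotProduct (p := p) e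
  have hI : LinearMap.range d = Ideal.span (Set.range (γ.repr (ψ 1))) := by
    rw [LinearMap.range_eq_map, ← e.span_eq, Submodule.map_span, ← Set.range_comp]
    refine congrArg (fun x => Ideal.span (Set.range x)) (funext fun i => ?_)
    rw [Function.comp_apply, ← hpψ, hγ, e.repr_self, Finsupp.single_eq_pi_single,
      single_one_dotProduct]
  rw [hI] at ha hb hc ⊢
  exact (h.isAlternatingResolution e γ hγ hpψ hpφ).isSyzygetic habc ha hb hc

end Perfect

end IsGorensteinResolution

end GorensteinResolution

/-! ### Ext and irreducible parameter sequences -/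

open CategoryTheory

section Exts

/-- `Ext^i(M, N)` for unbundled modules over a commutative ring, as an `R`-module. -/
abbrev ExtModule (R : Type u) [CommRing R] (M N : Type u) [AddCommGroup M] [Module R M]
    [AddCommGroup N] [Module R N] (i : ℕ) : Type u :=
  Abelian.Ext.{u} (ModuleCat.of R M) (ModuleCat.of R N) i

variable {R : Type u} [CommRing R] {A B C M N X Y : Type u}
  [AddCommGroup A] [Module R A] [AddCommGroup B] [Module R B] [AddCommGroup C] [Module R C]
  [AddCommGroup M] [Module R M] [AddCommGroup N] [Module R N]
  [AddCommGroup X] [Module R X] [AddCommGroup Y] [Module R Y]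

/-- `0 → A → B → C → 0` is a short exact sequence of modules. -/
structure IsShortExact (f : A →ₗ[R] B) (g : B →ₗ[R] C) : Prop where
  injective : Function.Injective f
  exact : Function.Exact f g
  surjective : Function.Surjective g

theorem isShortExact_subtype_ker {f : M →ₗ[R] N} (hf : Function.Surjective f) :
    IsShortExact (LinearMap.ker f).subtype f :=
  ⟨Submodule.subtype_injective _, f.exact_subtype_ker_map, hf⟩

theorem isShortExact_subtype_mkQ (p : Submodule R M) : IsShortExact p.subtype p.mkQ :=
  ⟨p.subtype_injective, LinearMap.exact_subtype_mkQ p, p.mkQ_surjective⟩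

theorem isShortExact_mkQ_range {f : M →ₗ[R] N} (hf : Function.Injective f) :
    IsShortExact f (LinearMap.range f).mkQ :=
  ⟨hf, f.exact_map_mkQ_range, Submodule.mkQ_surjective _⟩

theorem isShortExact_lsmul_mkQ {x : R} (hx : IsSMulRegular M x) :
    IsShortExact (LinearMap.lsmul R M x) (x • (⊤ : Submodule R M)).mkQ :=
  ⟨hx, LinearMap.exact_lsmul_mkQ_smul_top M x, Submodule.mkQ_surjective _⟩

theorem IsShortExact.shortExact {f : A →ₗ[R] B} {g : B →ₗ[R] C} (h : IsShortExact f g) :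
    (ModuleCat.shortComplexOfCompEqZero f g h.exact.linearMap_comp_eq_zero).ShortExact where
  exact := ModuleCat.shortComplex_exact _ h.exact
  mono_f := (ModuleCat.mono_iff_injective _).2 h.injective
  epi_g := (ModuleCat.epi_iff_surjective _).2 h.surjective

namespace ExtModule

/-- `Hom(M, N) ≃ Ext⁰(M, N)`. -/
noncomputable def ofHom : (M →ₗ[R] N) ≃ₗ[R] ExtModule R M N 0 :=
  (ModuleCat.homLinearEquiv (S := R) (M := .of R M) (N := .of R N)).symm.trans
    Abelian.Ext.linearEquiv₀.symm

theorem subsingleton_zero_iff :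
    Subsingleton (ExtModule R M N 0) ↔ Subsingleton (M →ₗ[R] N) :=
  ofHom.symm.toEquiv.subsingleton_congr

/-- The covariant action of a linear map on `Ext`, linear in both arguments. -/
noncomputable def map (X : Type u) [AddCommGroup X] [Module R X] (i : ℕ) :
    (M →ₗ[R] N) →ₗ[R] ExtModule R X M i →ₗ[R] ExtModule R X N i :=
  (Abelian.Ext.bilinearCompOfLinear R _ _ _ i 0 i (add_zero i)).flip ∘ₗ ofHom.toLinearMap

/-- The contravariant action of a linear map on `Ext`, linear in both arguments. -/
noncomputable def comap (Y : Type u) [AddCommGroup Y] [Module R Y] (i : ℕ) :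
    (M →ₗ[R] N) →ₗ[R] ExtModule R N Y i →ₗ[R] ExtModule R M Y i :=
  Abelian.Ext.bilinearCompOfLinear R _ _ _ 0 i i (zero_add i) ∘ₗ ofHom.toLinearMap

theorem map_apply {i : ℕ} (f : M →ₗ[R] N) (e : ExtModule R X M i) :
    map X i f e = e.comp (Abelian.Ext.mk₀ (ModuleCat.ofHom f)) (add_zero i) := rfl

theorem comap_apply {i : ℕ} (f : M →ₗ[R] N) (e : ExtModule R N Y i) :
    comap Y i f e = (Abelian.Ext.mk₀ (ModuleCat.ofHom f)).comp e (zero_add i) := rfl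

@[simp]
theorem map_id (i : ℕ) : map X i (LinearMap.id : M →ₗ[R] M) = LinearMap.id :=
  LinearMap.ext fun e => Abelian.Ext.comp_mk₀_id e

@[simp]
theorem comap_id (i : ℕ) : comap Y i (LinearMap.id : M →ₗ[R] M) = LinearMap.id :=
  LinearMap.ext fun e => Abelian.Ext.mk₀_id_comp e

theorem map_comp (i : ℕ) (g : B →ₗ[R] C) (f : A →ₗ[R] B) :
    map X i (g ∘ₗ f) = map X i g ∘ₗ map X i f := by
  ext e
  simp only [map_apply, LinearMap.comp_apply, ModuleCat.ofHom_comp,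
    Abelian.Ext.comp_assoc_of_third_deg_zero, Abelian.Ext.mk₀_comp_mk₀]

theorem comap_comp (i : ℕ) (g : B →ₗ[R] C) (f : A →ₗ[R] B) :
    comap Y i (g ∘ₗ f) = comap Y i f ∘ₗ comap Y i g := by
  ext e
  simp only [comap_apply, LinearMap.comp_apply, ModuleCat.ofHom_comp,
    Abelian.Ext.mk₀_comp_mk₀_assoc]

theorem subsingleton_of_equiv_left (e : A ≃ₗ[R] B) {i : ℕ}
    [Subsingleton (ExtModule R A Y i)] : Subsingleton (ExtModule R B Y i) := by
  refine Function.Injective.subsingleton (f := comap Y i e.toLinearMap) ?_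
  refine Function.LeftInverse.injective (g := comap Y i e.symm.toLinearMap) fun x => ?_
  rw [← LinearMap.comp_apply, ← comap_comp]
  simp

theorem smul_eq_zero_of_left {r : R} (hr : ∀ m : M, r • m = 0) {i : ℕ} (e : ExtModule R M N i) :
    r • e = 0 := by
  have hid : r • (LinearMap.id : M →ₗ[R] M) = 0 := LinearMap.ext hr
  simpa using LinearMap.congr_fun (congrArg (comap N i) hid) e

theorem map_lsmul_eq_zero_of_left {r : R} (hr : ∀ m : X, r • m = 0) (i : ℕ) :
    map X i (LinearMap.lsmul R M r) = 0 := by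
  have hid : LinearMap.lsmul R M r = r • LinearMap.id := rfl
  ext e
  simpa [hid] using smul_eq_zero_of_left hr e

theorem subsingleton_of_subsingleton_left [Subsingleton M] (i : ℕ) :
    Subsingleton (ExtModule R M N i) :=
  subsingleton_of_forall_eq 0 fun e => by
    simpa using smul_eq_zero_of_left (r := (1 : R)) (fun _ => Subsingleton.elim _ _) e

theorem comap_lsmul (r : R) {i : ℕ} (e : ExtModule R M N i) :
    comap N i (LinearMap.lsmul R M r) e = r • e := by
  have hid : LinearMap.lsmul R M r = r • LinearMap.id := rfl
  simp [hid]

section ShortExact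

variable {f : A →ₗ[R] B} {g : B →ₗ[R] C}

theorem map_injective (h : IsShortExact f g) {i : ℕ}
    (hC : ∀ j, j + 1 = i → Subsingleton (ExtModule R X C j)) :
    Function.Injective (map X i f) := by
  refine (injective_iff_map_eq_zero _).2 fun e he => ?_
  cases i with
  | zero =>
    have := (ModuleCat.mono_iff_injective (ModuleCat.ofHom f)).2 h.injective
    exact Abelian.Ext.postcomp_mk₀_injective_of_mono _ (ModuleCat.ofHom f) (he.trans (by simp))
  | succ i =>
    obtain ⟨c, rfl⟩ := Abelian.Ext.covariant_sequence_exact₁ _ h.shortExact e he rfl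
    rw [(hC i rfl).elim c 0, Abelian.Ext.zero_comp]

theorem comap_surjective (h : IsShortExact f g) {i : ℕ}
    (hC : Subsingleton (ExtModule R C Y (i + 1))) :
    Function.Surjective (comap Y i f) := fun e =>
  Abelian.Ext.contravariant_sequence_exact₁ h.shortExact _ e (add_comm 1 i) (hC.elim _ _)

theorem subsingleton_middle_left (h : IsShortExact f g) {i : ℕ}
    (hA : Subsingleton (ExtModule R A Y i)) (hC : Subsingleton (ExtModule R C Y i)) :
    Subsingleton (ExtModule R B Y i) := by
  refine subsingleton_of_forall_eq 0 fun e => ?_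
  obtain ⟨c, rfl⟩ :=
    Abelian.Ext.contravariant_sequence_exact₂ h.shortExact _ e (hA.elim _ _)
  rw [hC.elim c 0, Abelian.Ext.comp_zero]

theorem nonempty_equiv_succ (h : IsShortExact f g) {i : ℕ} (hB : Subsingleton (ExtModule R X B i))
    (hf : map X (i + 1) f = 0) :
    Nonempty (ExtModule R X C i ≃ₗ[R] ExtModule R X A (i + 1)) := by
  refine ⟨.ofBijective (h.shortExact.extClass.postcompOfLinear R (.of R X) rfl)
    ⟨(injective_iff_map_eq_zero _).2 fun c hc => ?_, fun a => ?_⟩⟩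
  · obtain ⟨b, rfl⟩ := Abelian.Ext.covariant_sequence_exact₃ _ h.shortExact c rfl hc
    rw [hB.elim b 0, Abelian.Ext.zero_comp]
  · exact Abelian.Ext.covariant_sequence_exact₁ _ h.shortExact a (LinearMap.congr_fun hf a) rfl

end ShortExact

theorem subsingleton_of_quotSMulTop [IsLocalRing R] [IsNoetherianRing R] [Module.Finite R M]
    [Module.Finite R N] {x : R} (hx : x ∈ IsLocalRing.maximalIdeal R) (hreg : IsSMulRegular M x)
    {i : ℕ} (hQ : Subsingleton (ExtModule R (QuotSMulTop x M) N (i + 1))) :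
    Subsingleton (ExtModule R M N i) := by
  suffices (⊤ : Submodule R (ExtModule R M N i)) = ⊥ from
    (Submodule.subsingleton_iff R).1 (subsingleton_of_bot_eq_top this.symm)
  refine Submodule.eq_bot_of_le_smul_of_le_jacobson_bot (Ideal.span {x}) _ Module.Finite.fg_top
    (fun e _ => ?_) ?_
  · obtain ⟨e', rfl⟩ := comap_surjective (isShortExact_lsmul_mkQ hreg) hQ e
    rw [comap_lsmul]
    exact Submodule.smul_mem_smul (Ideal.mem_span_singleton_self x) trivial
  · rw [Ideal.span_singleton_le_iff_mem]
    exact IsLocalRing.maximalIdeal_le_jacobson _ hx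

end ExtModule

end Exts

section Dimension

variable {R : Type u} [CommRing R]

theorem subsingleton_ext_of_subsingleton_derived (M N : ModuleCat.{u} R) {i : ℕ} (hi : 0 < i)
    (h : Subsingleton (((Ext R (ModuleCat.{u} R) i).obj (Opposite.op M)).obj N)) :
    Subsingleton (Abelian.Ext.{u} M N i) := by
  obtain ⟨j, rfl⟩ : ∃ j, i = j + 1 := ⟨i - 1, by omega⟩
  let P : ProjectiveResolution M := projectiveResolution M
  have hzero := (ModuleCat.isZero_of_subsingleton _).of_iso (P.isoExt (R := R) (j + 1) N).symm
  rw [← HomologicalComplex.exactAt_iff_isZero_homology,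
    HomologicalComplex.exactAt_iff' _ j (j + 1) (j + 2) (by simp) (by simp),
    ShortComplex.moduleCat_exact_iff] at hzero
  refine subsingleton_of_forall_eq 0 fun e => ?_
  obtain ⟨f, hf, rfl⟩ := P.extMk_surjective e (j + 2) rfl
  rw [P.extMk_eq_zero_iff f _ _ hf j rfl]
  exact hzero f hf

theorem exists_hasInjectiveDimensionLT_of_isGorensteinLocalRing (hR : IsGorensteinLocalRing R) :
    ∃ n, HasInjectiveDimensionLT (ModuleCat.of R R) n := by
  obtain ⟨-, -, n, hn⟩ := hR
  exact ⟨n + 1, (hasInjectiveDimensionLT_iff.{u} _ _).2 fun i hi M _ =>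
    Subsingleton.elim (h := subsingleton_ext_of_subsingleton_derived _ _ (by omega)
      (hn M i hi)) _ 0⟩

theorem hasProjectiveDimensionLE_of_projectiveDimensionLE {M : ModuleCat.{u} R} {n : ℕ}
    (h : projectiveDimensionLE R M n) : HasProjectiveDimensionLE M n :=
  (hasProjectiveDimensionLT_iff.{u} _ _).2 fun i hi N _ =>
    Subsingleton.elim (h := subsingleton_ext_of_subsingleton_derived _ _ (by omega) (h N i hi)) _ 0

end Dimension

section Rees

variable {R : Type u} [CommRing R] {M N : Type u} [AddCommGroup M] [Module R M]
  [AddCommGroup N] [Module R N]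

namespace ExtModule

theorem nonempty_quotSMulTop_equiv_succ {x : R} (hreg : IsSMulRegular M x)
    (hN : ∀ n : N, x • n = 0) {i : ℕ} (hi : Subsingleton (ExtModule R N M i)) :
    Nonempty (ExtModule R N (QuotSMulTop x M) i ≃ₗ[R] ExtModule R N M (i + 1)) :=
  nonempty_equiv_succ (isShortExact_lsmul_mkQ hreg) hi (map_lsmul_eq_zero_of_left hN _)

theorem subsingleton_of_lt_length {xs : List R} (hreg : IsWeaklyRegular M xs)
    (hN : ∀ x ∈ xs, ∀ n : N, x • n = 0) {i : ℕ} (hi : i < xs.length) :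
    Subsingleton (ExtModule R N M i) := by
  induction xs generalizing M i with
  | nil => simp at hi
  | cons x xs ih =>
    obtain ⟨hx, hxs⟩ := (isWeaklyRegular_cons_iff M x xs).1 hreg
    obtain ⟨hNx, hNxs⟩ := List.forall_mem_cons.1 hN
    induction i with
    | zero =>
      exact subsingleton_zero_iff.2 (IsSMulRegular.linearMap_subsingleton_of_mem_annihilator hx
        (Module.mem_annihilator.2 hNx))
    | succ i ih_i =>
      obtain ⟨e⟩ := nonempty_quotSMulTop_equiv_succ hx hNx (ih_i (by omega))
      exact e.toEquiv.subsingleton_congr.1 (ih hxs hNxs (by simpa using hi))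

theorem nonempty_length_equiv {xs : List R} (hreg : IsWeaklyRegular M xs)
    (hN : ∀ x ∈ xs, ∀ n : N, x • n = 0) :
    Nonempty (ExtModule R N M xs.length ≃ₗ[R]
      (N →ₗ[R] M ⧸ (Ideal.ofList xs • ⊤ : Submodule R M))) := by
  induction xs generalizing M with
  | nil =>
    have hbot : Ideal.ofList ([] : List R) • (⊤ : Submodule R M) = ⊥ := by simp
    exact ⟨ofHom.symm.trans (LinearEquiv.congrRight (Submodule.quotEquivOfEqBot _ hbot).symm)⟩
  | cons x xs ih =>
    obtain ⟨hx, hxs⟩ := (isWeaklyRegular_cons_iff M x xs).1 hreg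
    obtain ⟨hNx, hNxs⟩ := List.forall_mem_cons.1 hN
    obtain ⟨e⟩ := nonempty_quotSMulTop_equiv_succ hx hNx
      (subsingleton_of_lt_length hreg hN (by simp : xs.length < (x :: xs).length))
    obtain ⟨e'⟩ := ih hxs hNxs
    exact ⟨e.symm.trans (e'.trans (LinearEquiv.congrRight
      (Submodule.quotOfListConsSMulTopEquivQuotSMulTopInner M x xs).symm))⟩

theorem subsingleton_of_quotient_ofList [IsLocalRing R] [IsNoetherianRing R] [Module.Finite R M]
    [Module.Finite R N] {xs : List R} (hreg : IsWeaklyRegular M xs)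
    (hxs : ∀ x ∈ xs, x ∈ IsLocalRing.maximalIdeal R) {i : ℕ}
    (h : Subsingleton
      (ExtModule R (M ⧸ (Ideal.ofList xs • ⊤ : Submodule R M)) N (i + xs.length))) :
    Subsingleton (ExtModule R M N i) := by
  induction xs generalizing M i with
  | nil =>
    have hbot : Ideal.ofList ([] : List R) • (⊤ : Submodule R M) = ⊥ := by simp
    exact subsingleton_of_equiv_left (Submodule.quotEquivOfEqBot _ hbot)
  | cons x xs ih =>
    obtain ⟨hx, hxs'⟩ := (isWeaklyRegular_cons_iff M x xs).1 hreg
    obtain ⟨hxm, hxsm⟩ := List.forall_mem_cons.1 hxs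
    refine subsingleton_of_quotSMulTop hxm hx (ih hxs' hxsm ?_)
    rw [add_right_comm, add_assoc, ← List.length_cons (a := x)]
    exact subsingleton_of_equiv_left
      (Submodule.quotOfListConsSMulTopEquivQuotSMulTopInner M x xs)

end ExtModule

end Rees

section Quotient

variable {R : Type u} [CommRing R] {N : Type u} [AddCommGroup N] [Module R N]

theorem smul_quotient_eq_zero {J : Ideal R} {x : R} (hx : x ∈ J) (a : R ⧸ J) : x • a = 0 :=
  Module.mem_annihilator.1 (by rwa [Ideal.annihilator_quotient]) a

theorem isSMulRegular_quotient_of_notMem {p : Ideal R} [p.IsPrime] {x : R} (hx : x ∉ p) :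
    IsSMulRegular (R ⧸ p) x := by
  rw [isSMulRegular_iff_right_eq_zero_of_smul]
  intro a ha
  rw [Algebra.smul_def, mul_eq_zero] at ha
  exact ha.resolve_left (mt Ideal.Quotient.eq_zero_iff_mem.1 hx)

theorem surjective_toSpanSingleton_id_quotient (J : Ideal R) :
    Function.Surjective (LinearMap.toSpanSingleton R ((R ⧸ J) →ₗ[R] R ⧸ J) LinearMap.id) := by
  intro u
  obtain ⟨r, hr⟩ := Ideal.Quotient.mk_surjective (u 1)
  refine ⟨r, Submodule.linearMap_qext _ (LinearMap.ext_ring ?_)⟩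
  have : r • (1 : R ⧸ J) = u 1 := by rw [← hr, Algebra.smul_def, mul_one]; rfl
  exact this

theorem nonempty_ext_length_equiv_quotient {xs : List R} (hreg : IsWeaklyRegular R xs)
    (hN : ∀ x ∈ xs, ∀ n : N, x • n = 0) :
    Nonempty (ExtModule R N R xs.length ≃ₗ[R] (N →ₗ[R] R ⧸ Ideal.ofList xs)) := by
  obtain ⟨e⟩ := ExtModule.nonempty_length_equiv hreg hN
  exact ⟨e.trans (LinearEquiv.congrRight (Submodule.quotEquivOfEq _ _ (by simp)))⟩

end Quotient

section FiniteInjectiveDimension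

variable {R : Type u} [CommRing R] [IsLocalRing R]

local notation "𝔪" => IsLocalRing.maximalIdeal R

instance isSimpleModule_residueField : IsSimpleModule R (R ⧸ 𝔪) :=
  isSimpleModule_iff_isCoatom.2 (Ideal.isMaximal_def.1 inferInstance)

theorem isSimpleModule_of_surjective {M : Type*} [AddCommGroup M] [Module R M] [Nontrivial M]
    (hM : ∀ x ∈ 𝔪, ∀ m : M, x • m = 0) {g : R →ₗ[R] M} (hg : Function.Surjective g) :
    IsSimpleModule R M := by
  have hle : 𝔪 ≤ LinearMap.ker g := fun x hx => by
    simpa [hM x hx] using g.map_smul x 1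
  have hne : LinearMap.ker g ≠ ⊤ := fun htop => by
    obtain ⟨m, hm⟩ := exists_ne (0 : M)
    obtain ⟨r, rfl⟩ := hg m
    exact hm (LinearMap.congr_fun (LinearMap.ker_eq_top.1 htop) r)
  have hker : 𝔪 = LinearMap.ker g :=
    (IsLocalRing.maximalIdeal.isMaximal R).eq_of_le hne hle
  exact isSimpleModule_iff_quot_maximal.2 ⟨𝔪, inferInstance,
    ⟨((Submodule.quotEquivOfEq _ _ hker).trans (g.quotKerEquivOfSurjective hg)).symm⟩⟩

/-- `Ext^i(M, N) = 0` for every finitely generated module `M`. -/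
def HasVanishingExt (N : Type u) [AddCommGroup N] [Module R N] (i : ℕ) : Prop :=
  ∀ (M : Type u) [AddCommGroup M] [Module R M] [Module.Finite R M],
    Subsingleton (ExtModule R M N i)

theorem isSimpleModule_socle_quotient_ofList {xs : List R}
    (h : HasVanishingExt (R := R) R (xs.length + 1)) (hreg : IsRegular R xs)
    (hxs : ∀ x ∈ xs, x ∈ 𝔪)
    {f : (R ⧸ 𝔪) →ₗ[R] R ⧸ Ideal.ofList xs} (hf : Function.Injective f) :
    IsSimpleModule R ((R ⧸ 𝔪) →ₗ[R] R ⧸ Ideal.ofList xs) := by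
  obtain ⟨ek⟩ := nonempty_ext_length_equiv_quotient (N := R ⧸ 𝔪) hreg.toIsWeaklyRegular
    fun x hx => smul_quotient_eq_zero (hxs x hx)
  obtain ⟨eQ⟩ := nonempty_ext_length_equiv_quotient (N := R ⧸ Ideal.ofList xs)
    hreg.toIsWeaklyRegular fun x hx => smul_quotient_eq_zero (Ideal.subset_span hx)
  have hcomap := ExtModule.comap_surjective (isShortExact_mkQ_range hf) (h _)
  have : Nontrivial ((R ⧸ 𝔪) →ₗ[R] R ⧸ Ideal.ofList xs) :=
    ⟨f, 0, fun hf0 => one_ne_zero (hf (by simp [hf0]) : (1 : R ⧸ 𝔪) = 0)⟩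
  refine isSimpleModule_of_surjective (g := ek.toLinearMap ∘ₗ
      ExtModule.comap R xs.length f ∘ₗ eQ.symm.toLinearMap ∘ₗ
      LinearMap.toSpanSingleton R _ LinearMap.id)
    (fun x hx u => LinearMap.ext fun a => ?_) ?_
  · rw [LinearMap.smul_apply, ← map_smul, smul_quotient_eq_zero hx, map_zero, LinearMap.zero_apply]
  · exact ek.surjective.comp (hcomap.comp
      (eQ.symm.surjective.comp (surjective_toSpanSingleton_id_quotient _)))

variable [IsNoetherianRing R] {N : Type u} [AddCommGroup N] [Module R N]

theorem HasVanishingExt.subsingleton_quotient_prime [Module.Finite R N] {i : ℕ}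
    (h : HasVanishingExt (R := R) N (i + 1)) {p : Ideal R} [p.IsPrime] (hp : p ≠ 𝔪) :
    Subsingleton (ExtModule R (R ⧸ p) N i) := by
  obtain ⟨x, hx, hxp⟩ := SetLike.exists_of_lt
    (lt_of_le_of_ne (IsLocalRing.le_maximalIdeal (Ideal.IsPrime.ne_top ‹p.IsPrime›)) hp)
  exact ExtModule.subsingleton_of_quotSMulTop hx (isSMulRegular_quotient_of_notMem hxp) (h _)

theorem HasVanishingExt.of_succ [Module.Finite R N] {i : ℕ}
    (h : HasVanishingExt (R := R) N (i + 1)) (hk : Subsingleton (ExtModule R (R ⧸ 𝔪) N i)) :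
    HasVanishingExt (R := R) N i := by
  intro M _ _ _
  refine IsNoetherianRing.induction_on_isQuotientEquivQuotientPrime R (M := M) inferInstance
    (motive := fun M _ _ _ => Subsingleton (ExtModule R M N i)) ?_ ?_ ?_
  · intro M _ _ _ _
    exact ExtModule.subsingleton_of_subsingleton_left i
  · intro M _ _ _ p e
    suffices Subsingleton (ExtModule R (R ⧸ p.asIdeal) N i) from
      ExtModule.subsingleton_of_equiv_left e.symm
    by_cases hp : p.asIdeal = 𝔪
    · rwa [hp]
    · exact h.subsingleton_quotient_prime hp
  · intro M₁ _ _ _ M₂ _ _ _ M₃ _ _ _ f g hf hg hfg h₁ h₃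
    exact ExtModule.subsingleton_middle_left ⟨hf, hfg, hg⟩ h₁ h₃

theorem exists_hasVanishingExt_succ [Module.Finite R N] [Nontrivial N] {n : ℕ}
    (h : HasVanishingExt (R := R) N n) :
    ∃ D, HasVanishingExt (R := R) N (D + 1) ∧ ¬ Subsingleton (ExtModule R (R ⧸ 𝔪) N D) := by
  induction n with
  | zero =>
    have : Subsingleton (N →ₗ[R] N) := ExtModule.subsingleton_zero_iff.1 (h N)
    exact absurd (LinearMap.congr_fun (Subsingleton.elim (LinearMap.id : N →ₗ[R] N) 0))
      fun h0 => not_subsingleton N (subsingleton_of_forall_eq 0 h0)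
  | succ n ih =>
    by_cases hk : Subsingleton (ExtModule R (R ⧸ 𝔪) N n)
    · exact ih (h.of_succ hk)
    · exact ⟨n, h, hk⟩

/-- A maximal regular sequence whose quotient has a one-dimensional socle and
is supported at the closed point only, so that it generates an irreducible parameter ideal. -/
structure IsIrreducibleParameterSequence (xs : List R) : Prop where
  isRegular : IsRegular R xs
  mem_maximalIdeal : ∀ x ∈ xs, x ∈ 𝔪
  maximalIdeal_le_radical : 𝔪 ≤ (Ideal.ofList xs).radical
  isSimpleModule_socle : IsSimpleModule R ((R ⧸ 𝔪) →ₗ[R] R ⧸ Ideal.ofList xs)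

theorem hasProjectiveDimensionLE_quotient_ofList {xs : List R} (hreg : IsWeaklyRegular R xs)
    (hxs : ∀ x ∈ xs, x ∈ 𝔪) :
    HasProjectiveDimensionLE (ModuleCat.of R (R ⧸ Ideal.ofList xs)) xs.length := by
  have hR : HasProjectiveDimensionLE (ModuleCat.of R R) 0 :=
    projective_iff_hasProjectiveDimensionLT_one.1
      (ModuleCat.projective_of_free (Module.Basis.singleton Unit R))
  have hpd := ModuleCat.projectiveDimension_quotient_eq_add_length_of_isWeaklyRegular
    (ModuleCat.of R R) xs hreg hxs
  rw [smul_eq_mul, Ideal.mul_top] at hpd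
  rw [← projectiveDimension_le_iff, hpd]
  simpa using add_le_add_left ((projectiveDimension_le_iff _ _).2 hR) (xs.length : WithBot ℕ∞)

/- In the lowest degree where `Ext(R ⧸ 𝔪, R)` does not vanish, Rees' theorem gives a maximal regular
sequence; its quotient has projective dimension its length, so nonvanishing in degree `D` bounds
that length from below. -/
theorem exists_isRegular_injective {D : ℕ} (h : HasVanishingExt (R := R) R (D + 1))
    (hD : ¬ Subsingleton (ExtModule R (R ⧸ 𝔪) R D)) :
    ∃ xs : List R, xs.length = D ∧ (∀ x ∈ xs, x ∈ 𝔪) ∧ IsRegular R xs ∧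
      ∃ f : (R ⧸ 𝔪) →ₗ[R] R ⧸ Ideal.ofList xs, Function.Injective f := by
  classical
  have hex : ∃ d, ¬ Subsingleton (ExtModule R (R ⧸ 𝔪) R d) := ⟨D, hD⟩
  obtain ⟨xs, hlen, hmem, hreg⟩ := ModuleCat.exists_isRegular_of_exists_subsingleton_ext 𝔪
    (Nat.find hex) (ModuleCat.of R R)
    (by simpa [lt_top_iff_ne_top] using Ideal.IsPrime.ne_top inferInstance)
    (ModuleCat.of R (R ⧸ 𝔪)) (by rw [Module.support_eq_zeroLocus, Ideal.annihilator_quotient])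
    (fun i hi => not_not.1 (Nat.find_min hex hi))
  obtain ⟨e⟩ := nonempty_ext_length_equiv_quotient (N := R ⧸ 𝔪) hreg.toIsWeaklyRegular
    fun x hx => smul_quotient_eq_zero (hmem x hx)
  have hnontriv : Nontrivial ((R ⧸ 𝔪) →ₗ[R] R ⧸ Ideal.ofList xs) := by
    rw [← not_subsingleton_iff_nontrivial, ← e.toEquiv.subsingleton_congr, hlen]
    exact Nat.find_spec hex
  obtain ⟨f, hf⟩ := exists_ne (0 : (R ⧸ 𝔪) →ₗ[R] R ⧸ Ideal.ofList xs)
  have hf_inj : Function.Injective f := LinearMap.injective_of_ne_zero hf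
  have hQ : ¬ Subsingleton (ExtModule R (R ⧸ Ideal.ofList xs) R D) := fun hQ =>
    hD (ExtModule.comap_surjective (isShortExact_mkQ_range hf_inj) (h _)).subsingleton
  refine ⟨xs, (hlen.trans_le (Nat.find_min' hex hD)).antisymm ?_, hmem, hreg, f, hf_inj⟩
  by_contra! hlt
  have := hasProjectiveDimensionLE_quotient_ofList hreg.toIsWeaklyRegular hmem
  exact hQ (HasProjectiveDimensionLT.subsingleton _ (xs.length + 1) _ hlt _)

theorem maximalIdeal_le_radical_ofList {xs : List R}
    (h : HasVanishingExt (R := R) R (xs.length + 1)) (hreg : IsRegular R xs)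
    {f : (R ⧸ 𝔪) →ₗ[R] R ⧸ Ideal.ofList xs} (hf : Function.Injective f) :
    𝔪 ≤ (Ideal.ofList xs).radical := by
  rw [Ideal.radical_eq_sInf, le_sInf_iff]
  rintro p ⟨hxp, hp⟩
  by_contra hpm
  have hp_le : p ≤ 𝔪 := IsLocalRing.le_maximalIdeal hp.ne_top
  obtain ⟨e⟩ := nonempty_ext_length_equiv_quotient (N := R ⧸ p) hreg.toIsWeaklyRegular
    fun x hx => smul_quotient_eq_zero (hxp (Ideal.subset_span hx))
  have hhom : Subsingleton ((R ⧸ p) →ₗ[R] R ⧸ Ideal.ofList xs) :=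
    e.toEquiv.subsingleton_congr.1 (h.subsingleton_quotient_prime fun hpm' => hpm hpm'.ge)
  have hzero := LinearMap.congr_fun (hhom.elim (f ∘ₗ Submodule.factor hp_le) 0)
    (Submodule.Quotient.mk 1)
  exact one_ne_zero (hf (hzero.trans (map_zero f).symm) : (1 : R ⧸ 𝔪) = 0)

theorem exists_isIrreducibleParameterSequence (n : ℕ)
    [HasInjectiveDimensionLT (ModuleCat.of R R) n] :
    ∃ xs : List R, IsIrreducibleParameterSequence xs := by
  have hvan : HasVanishingExt (R := R) R n := fun M _ _ _ =>
    HasInjectiveDimensionLT.subsingleton _ n _ le_rfl _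
  obtain ⟨D, hsucc, hD⟩ := exists_hasVanishingExt_succ hvan
  obtain ⟨xs, rfl, hmem, hreg, f, hf⟩ := exists_isRegular_injective hsucc hD
  exact ⟨xs, hreg, hmem, maximalIdeal_le_radical_ofList hsucc hreg hf,
    isSimpleModule_socle_quotient_ofList hsucc hreg hmem hf⟩

end FiniteInjectiveDimension

section ChangeOfRings

variable {R : Type u} [CommRing R] {S : Type u} [CommRing S] [Algebra R S] {ys : List R}

theorem nonempty_quotient_ofList_map_equiv (ys : List R) :
    Nonempty ((S ⧸ Ideal.ofList (ys.map (algebraMap R S))) ≃ₗ[R]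
      S ⧸ (Ideal.ofList ys • ⊤ : Submodule R S)) := by
  have heq : (Ideal.ofList (ys.map (algebraMap R S))).restrictScalars R =
      (Ideal.ofList ys • ⊤ : Submodule R S) := by
    rw [Ideal.smul_top_eq_map, Ideal.map_ofList]
  exact ⟨(Submodule.Quotient.restrictScalarsEquiv R _).symm.trans
    (Submodule.quotEquivOfEq _ _ heq)⟩

variable [IsLocalRing S]

theorem IsIrreducibleParameterSequence.isWeaklyRegular_of_map
    (h : IsIrreducibleParameterSequence (ys.map (algebraMap R S))) : IsWeaklyRegular S ys :=
  (isWeaklyRegular_map_algebraMap_iff S S ys).1 h.isRegular.toIsWeaklyRegular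

variable [IsLocalRing R]

local notation "𝔪" => IsLocalRing.maximalIdeal R

theorem algebraMap_mem_maximalIdeal_iff (hs : Function.Surjective (algebraMap R S)) {x : R} :
    algebraMap R S x ∈ IsLocalRing.maximalIdeal S ↔ x ∈ 𝔪 := by
  have := IsLocalHom.of_surjective _ hs
  simp only [IsLocalRing.mem_maximalIdeal, map_mem_nonunits_iff]

theorem nonempty_residueField_equiv (hs : Function.Surjective (algebraMap R S)) :
    Nonempty ((R ⧸ 𝔪) ≃ₗ[R] S ⧸ IsLocalRing.maximalIdeal S) := by
  have hker : 𝔪 = LinearMap.ker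
      (((IsLocalRing.maximalIdeal S).mkQ.restrictScalars R) ∘ₗ Algebra.linearMap R S) := by
    ext x
    exact (algebraMap_mem_maximalIdeal_iff hs).symm.trans Ideal.Quotient.eq_zero_iff_mem.symm
  exact ⟨(Submodule.quotEquivOfEq _ _ hker).trans
    (LinearMap.quotKerEquivOfSurjective _ ((Submodule.mkQ_surjective _).comp hs))⟩

theorem IsIrreducibleParameterSequence.mem_maximalIdeal_of_map
    (hs : Function.Surjective (algebraMap R S))
    (h : IsIrreducibleParameterSequence (ys.map (algebraMap R S))) : ∀ y ∈ ys, y ∈ 𝔪 := fun _ hy =>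
  (algebraMap_mem_maximalIdeal_iff hs).1 (h.mem_maximalIdeal _ (List.mem_map_of_mem hy))

theorem IsIrreducibleParameterSequence.isSimpleModule_socle_of_map
    (hs : Function.Surjective (algebraMap R S))
    (h : IsIrreducibleParameterSequence (ys.map (algebraMap R S))) :
    IsSimpleModule R ((R ⧸ 𝔪) →ₗ[R] S ⧸ (Ideal.ofList ys • ⊤ : Submodule R S)) := by
  obtain ⟨ek⟩ := nonempty_residueField_equiv hs
  obtain ⟨eN⟩ := nonempty_quotient_ofList_map_equiv (S := S) ys
  have hsimple := h.isSimpleModule_socle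
  rw [← isSimpleModule_iff_isSimpleModule_of_algebraMap_surjective hs] at hsimple
  have e := (ek.arrowCongr eN.symm).trans (LinearMap.extendScalarsOfSurjectiveEquiv hs)
  exact IsSimpleModule.congr e

theorem IsIrreducibleParameterSequence.isSimpleModule_ext
    (hs : Function.Surjective (algebraMap R S))
    (h : IsIrreducibleParameterSequence (ys.map (algebraMap R S))) :
    IsSimpleModule R (ExtModule R (R ⧸ 𝔪) S ys.length) := by
  have := h.isSimpleModule_socle_of_map hs
  obtain ⟨e⟩ := ExtModule.nonempty_length_equiv (N := R ⧸ 𝔪) h.isWeaklyRegular_of_map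
    fun x hx => smul_quotient_eq_zero (h.mem_maximalIdeal_of_map hs x hx)
  exact IsSimpleModule.congr e

theorem IsIrreducibleParameterSequence.map_maximalIdeal_le_radical
    (hs : Function.Surjective (algebraMap R S))
    (h : IsIrreducibleParameterSequence (ys.map (algebraMap R S))) :
    𝔪 ≤ (Module.annihilator R (S ⧸ (Ideal.ofList ys • ⊤ : Submodule R S))).radical := by
  intro x hx
  obtain ⟨n, hn⟩ := h.maximalIdeal_le_radical ((algebraMap_mem_maximalIdeal_iff hs).2 hx)
  refine ⟨n, Module.mem_annihilator.2 fun a => ?_⟩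
  obtain ⟨s, rfl⟩ := Submodule.mkQ_surjective _ a
  rw [← map_smul, Submodule.mkQ_apply, Submodule.Quotient.mk_eq_zero, Ideal.smul_top_eq_map,
    Submodule.restrictScalars_mem, Ideal.map_ofList, Algebra.smul_def, map_pow]
  exact Ideal.mul_mem_right _ _ hn

end ChangeOfRings

section Dimension

variable {R : Type u} [CommRing R]

theorem idealHeight_eq_height (I : Ideal R) : idealHeight I = I.height := by
  refine le_antisymm ?_ (le_iInf₂ fun p hp => ?_)
  · rw [I.height_eq_inf_minimalPrimes]
    refine le_iInf₂ fun p hp => ?_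
    rw [PrimeSpectrum.height_eq_orderHeight ⟨p, hp.isPrime⟩]
    exact iInf₂_le (f := fun (q : PrimeSpectrum R) (_ : I ≤ q.asIdeal) => Order.height q)
      _ hp.1.2
  · exact p.height_eq_orderHeight ▸ Ideal.height_mono hp

theorem ringKrullDim_quotient_add_height_le {I : Ideal R} (hI : I ≠ ⊤) :
    ringKrullDim (R ⧸ I) + I.height ≤ ringKrullDim R := by
  have : Nontrivial R := (Submodule.nontrivial_iff R).1 ⟨I, ⊤, hI⟩
  have : Nonempty (PrimeSpectrum.zeroLocus (I : Set R)) :=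
    Set.nonempty_iff_ne_empty'.2 (mt PrimeSpectrum.zeroLocus_empty_iff_eq_top.1 hI)
  rw [ringKrullDim_quotient, Order.krullDim_eq_iSup_coheight_of_nonempty, ringKrullDim,
    Order.krullDim_eq_iSup_height_add_coheight_of_nonempty]
  norm_cast
  rw [ENat.iSup_add]
  refine iSup_le fun p => le_iSup_of_le p.1 ?_
  rw [add_comm]
  gcongr
  · exact p.1.height_eq_orderHeight ▸ Ideal.height_mono p.2
  · exact Order.coheight_le_coheight_apply_of_strictMono _ (Subtype.strictMono_coe _) p

theorem nontrivial_quotient_ofList {rs : List R} (h : IsRegular R rs) :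
    Nontrivial (R ⧸ Ideal.ofList rs) :=
  Ideal.Quotient.nontrivial_iff.2 (by simpa using h.top_ne_smul.symm)

theorem IsIrreducibleParameterSequence.krullDimLE_zero_quotient
    [IsLocalRing R] {xs : List R} (h : IsIrreducibleParameterSequence xs) :
    Ring.KrullDimLE 0 (R ⧸ Ideal.ofList xs) := by
  refine Ring.krullDimLE_zero_iff.2 fun P hP => ?_
  have hcomap : IsLocalRing.maximalIdeal R = P.comap (Ideal.Quotient.mk (Ideal.ofList xs)) := by
    refine (IsLocalRing.maximalIdeal.isMaximal R).eq_of_le (hP.comap _).ne_top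
      (h.maximalIdeal_le_radical.trans ((hP.comap _).radical_le_iff.2 ?_))
    exact (Ideal.mk_ker (I := Ideal.ofList xs)).symm.trans_le (Ideal.comap_mono bot_le)
  rw [← Ideal.map_comap_of_surjective _ Ideal.Quotient.mk_surjective P, ← hcomap]
  refine Ideal.IsMaximal.map_of_surjective_of_ker_le Ideal.Quotient.mk_surjective ?_
  rw [Ideal.mk_ker]
  exact Ideal.span_le.2 h.mem_maximalIdeal

variable [IsNoetherianRing R]

theorem length_le_ringKrullDim_of_isRegular [IsLocalRing R] {rs : List R} (h : IsRegular R rs) :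
    (rs.length : WithBot ℕ∞) ≤ ringKrullDim R := by
  have := nontrivial_quotient_ofList h
  rw [← ringKrullDim_add_length_eq_ringKrullDim_of_isRegular rs h]
  exact le_add_of_nonneg_left ringKrullDim_nonneg_of_nontrivial

theorem length_le_height_of_isWeaklyRegular {I : Ideal R} {rs : List R}
    (hreg : IsWeaklyRegular R rs) (hI : ∀ r ∈ rs, r ∈ I) : (rs.length : ℕ∞) ≤ I.height := by
  rw [I.height_eq_inf_minimalPrimes]
  refine le_iInf₂ fun p hp => ?_
  have := hp.isPrime
  have := IsLocalization.isNoetherianRing p.primeCompl (Localization.AtPrime p) ‹_›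
  have hle := length_le_ringKrullDim_of_isRegular (hreg.isRegular_of_isLocalization_of_mem
    (Localization.AtPrime p) p fun r hr => hp.1.2 (hI r hr))
  rw [IsLocalization.AtPrime.ringKrullDim_eq_height p, List.length_map] at hle
  exact_mod_cast hle

variable [IsLocalRing R] {xs : List R}

theorem IsIrreducibleParameterSequence.ringKrullDim_eq_length
    (h : IsIrreducibleParameterSequence xs) : ringKrullDim R = xs.length := by
  have := nontrivial_quotient_ofList h.isRegular
  have := h.krullDimLE_zero_quotient
  rw [← ringKrullDim_add_length_eq_ringKrullDim_of_isRegular xs h.isRegular,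
    ringKrullDimZero_iff_ringKrullDim_eq_zero.1 this, zero_add]

end Dimension

section Grade

variable {R : Type u} [CommRing R] [IsNoetherianRing R] [IsLocalRing R] {I : Ideal R}
  [IsLocalRing (R ⧸ I)] {xs ys : List R}

local notation "𝔪" => IsLocalRing.maximalIdeal R

theorem subsingleton_ext_quotient_of_add_length_lt (hxs : IsIrreducibleParameterSequence xs)
    (hys : IsIrreducibleParameterSequence (ys.map (algebraMap R (R ⧸ I)))) {i : ℕ}
    (hi : i + ys.length < xs.length) : Subsingleton (ExtModule R (R ⧸ I) R i) := by
  have hs : Function.Surjective (algebraMap R (R ⧸ I)) := Ideal.Quotient.mk_surjective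
  refine ExtModule.subsingleton_of_quotient_ofList hys.isWeaklyRegular_of_map
    (hys.mem_maximalIdeal_of_map hs) ?_
  refine ModuleCat.subsingleton_ext_of_exists_isRegular 𝔪 (.of R _) ?_ (.of R R) ?_ xs
    hxs.mem_maximalIdeal hxs.isRegular _ hi
  · intro p hp
    exact (hys.map_maximalIdeal_le_radical hs).trans
      (p.isPrime.radical_le_iff.2 (Module.mem_support_iff_of_finite.1 hp))
  · simpa [lt_top_iff_ne_top] using Ideal.IsPrime.ne_top inferInstance

theorem length_eq_add_height_and_exists_isRegular (hxs : IsIrreducibleParameterSequence xs)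
    (hys : IsIrreducibleParameterSequence (ys.map (algebraMap R (R ⧸ I)))) {g : ℕ}
    (hg : I.height = g) : xs.length = ys.length + g ∧
      ∃ rs : List R, rs.length = g ∧ (∀ r ∈ rs, r ∈ I) ∧ IsRegular R rs := by
  have hI : I ≠ ⊤ := Ideal.Quotient.nontrivial_iff.1 inferInstance
  obtain ⟨rs, hlen, hmem, hreg⟩ := ModuleCat.exists_isRegular_of_exists_subsingleton_ext I
    (xs.length - ys.length) (.of R R) (by simpa [lt_top_iff_ne_top])
    (.of R (R ⧸ I)) (by rw [Module.support_eq_zeroLocus, Ideal.annihilator_quotient])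
    fun i hi => subsingleton_ext_quotient_of_add_length_lt hxs hys (by omega)
  have hgrade := length_le_height_of_isWeaklyRegular hreg.toIsWeaklyRegular hmem
  have hdim := ringKrullDim_quotient_add_height_le hI
  rw [hxs.ringKrullDim_eq_length, hys.ringKrullDim_eq_length, List.length_map, hg] at hdim
  rw [hlen, hg] at hgrade
  norm_cast at hdim hgrade
  exact ⟨by omega, rs, by omega, hmem, hreg⟩

end Grade

/-! ### Minimal resolutions of Gorenstein quotients -/

section FreeModules

variable {R : Type u} [CommRing R] {ι : Type*} {K M X : Type u} [AddCommGroup K] [Module R K]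
  [AddCommGroup M] [Module R M] [AddCommGroup X] [Module R X]

theorem linearMap_mem_smul_top [Module.Free R K] [Module.Finite R K] {I : Ideal R}
    {f : K →ₗ[R] M} (hf : LinearMap.range f ≤ I • ⊤) :
    f ∈ I • (⊤ : Submodule R (K →ₗ[R] M)) := by
  let b := Module.Free.chooseBasis R K
  have hsum : f = ∑ j, LinearMap.smulRightₗ (b.coord j) (f (b j)) := b.ext fun l => by
    simp [b.repr_self, Finsupp.single_apply, ite_smul]
  rw [hsum]
  exact Submodule.sum_mem _ fun j _ =>
    Submodule.smul_top_le_comap_smul_top I _ (hf (LinearMap.mem_range_self f (b j)))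

namespace ExtModule

theorem map_eq_zero_of_range_le [Module.Free R K] [Module.Finite R K] {I : Ideal R}
    {f : K →ₗ[R] M} (hf : LinearMap.range f ≤ I • ⊤) (i : ℕ) : map (R ⧸ I) i f = 0 := by
  refine Submodule.smul_induction_on (p := fun f => map (R ⧸ I) i f = 0)
    (linearMap_mem_smul_top hf) (fun r hr f _ => ?_) fun f g hf hg => by
      rw [map_add, hf, hg, add_zero]
  ext e
  rw [map_smul, LinearMap.smul_apply]
  exact smul_eq_zero_of_left (smul_quotient_eq_zero hr) _

theorem eq_zero_of_map_coord_eq_zero [Finite ι] (b : Module.Basis ι R K) {i : ℕ}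
    {e : ExtModule R X K i} (h : ∀ j, map X i (b.coord j) e = 0) : e = 0 := by
  have := Fintype.ofFinite ι
  have hid : (LinearMap.id : K →ₗ[R] K) =
      ∑ j, LinearMap.toSpanSingleton R K (b j) ∘ₗ b.coord j := by
    ext x
    simp [b.sum_repr]
  have he := LinearMap.congr_fun (congrArg (map X i) hid) e
  simpa [map_comp, h] using he

theorem subsingleton_of_free [Module.Free R K] [Module.Finite R K] {i : ℕ}
    [Subsingleton (ExtModule R X R i)] : Subsingleton (ExtModule R X K i) :=
  subsingleton_of_forall_eq 0 fun _ =>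
    eq_zero_of_map_coord_eq_zero (Module.Free.chooseBasis R K) fun _ => Subsingleton.elim _ _

theorem map_coord_map_toSpanSingleton (b : Module.Basis ι R K) (j : ι) {i : ℕ}
    (e : ExtModule R X R i) :
    map X i (b.coord j) (map X i (LinearMap.toSpanSingleton R K (b j)) e) = e := by
  have hid : b.coord j ∘ₗ LinearMap.toSpanSingleton R K (b j) = LinearMap.id := by
    ext
    simp
  rw [← LinearMap.comp_apply, ← map_comp, hid, map_id, LinearMap.id_apply]

theorem map_coord_map_toSpanSingleton_of_ne (b : Module.Basis ι R K) {j l : ι} (hjl : j ≠ l)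
    {i : ℕ} (e : ExtModule R X R i) :
    map X i (b.coord l) (map X i (LinearMap.toSpanSingleton R K (b j)) e) = 0 := by
  have hzero : b.coord l ∘ₗ LinearMap.toSpanSingleton R K (b j) = 0 := by
    ext
    simp [hjl]
  rw [← LinearMap.comp_apply, ← map_comp, hzero, map_zero, LinearMap.zero_apply]

theorem isEmpty_of_basis_of_subsingleton (b : Module.Basis ι R K) (X : Type u) [AddCommGroup X]
    [Module R X] (i : ℕ) [Nontrivial (ExtModule R X R i)] [Subsingleton (ExtModule R X K i)] :
    IsEmpty ι := by
  refine ⟨fun j => not_subsingleton (ExtModule R X R i) ?_⟩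
  exact (Function.LeftInverse.injective (map_coord_map_toSpanSingleton b j)).subsingleton

theorem subsingleton_of_basis_of_isSimpleModule (b : Module.Basis ι R K) {X : Type u}
    [AddCommGroup X] [Module R X] {i : ℕ} [Nontrivial (ExtModule R X R i)]
    [IsSimpleModule R (ExtModule R X K i)] : Subsingleton ι := by
  refine ⟨fun j l => of_not_not fun hjl => ?_⟩
  obtain ⟨η, hη⟩ := exists_ne (0 : ExtModule R X R i)
  have hsurj : Function.Surjective (map X i (LinearMap.toSpanSingleton R K (b j))) :=
    LinearMap.surjective_of_ne_zero fun hzero =>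
      hη (by simpa [hzero] using (map_coord_map_toSpanSingleton b j η).symm)
  obtain ⟨ζ, hζ⟩ := hsurj (map X i (LinearMap.toSpanSingleton R K (b l)) η)
  refine hη ?_
  rw [← map_coord_map_toSpanSingleton b l η, ← hζ, map_coord_map_toSpanSingleton_of_ne b hjl]

theorem nonempty_linearEquiv_of_isSimpleModule [Module.Free R K] [Module.Finite R K] (X : Type u)
    [AddCommGroup X] [Module R X] (i : ℕ) [Nontrivial (ExtModule R X R i)]
    [IsSimpleModule R (ExtModule R X K i)] : Nonempty (R ≃ₗ[R] K) := by
  let b := Module.Free.chooseBasis R K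
  have := subsingleton_of_basis_of_isSimpleModule b (X := X) (i := i)
  have := IsSimpleModule.nontrivial R (ExtModule R X K i)
  obtain ⟨e, he⟩ := exists_ne (0 : ExtModule R X K i)
  obtain ⟨j, -⟩ := not_forall.1 (mt (eq_zero_of_map_coord_eq_zero b) he)
  exact ⟨(b.repr.trans (Finsupp.uniqueLinearEquiv R R j)).symm⟩

end ExtModule

end FreeModules

section MinimalCovers

variable {R : Type u} [CommRing R] [IsLocalRing R]

local notation "𝔪" => IsLocalRing.maximalIdeal R

theorem exists_surjective_ker_le_smul_top (M : Type*) [AddCommGroup M] [Module R M]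
    [Module.Finite R M] : ∃ (n : ℕ) (f : (Fin n → R) →ₗ[R] M),
      Function.Surjective f ∧ LinearMap.ker f ≤ 𝔪 • ⊤ := by
  let k := IsLocalRing.ResidueField R
  let b := Module.finBasis k (k ⊗[R] M)
  obtain ⟨m, hm⟩ :=
    (TensorProduct.mk_surjective R M k IsLocalRing.residue_surjective).comp_left b
  refine ⟨_, Fintype.linearCombination R m, ?_, fun v hv => ?_⟩
  · rw [← LinearMap.range_eq_top, Fintype.range_linearCombination]
    exact IsLocalRing.span_eq_top_of_tmul_eq_basis m b (congrFun hm)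
  have hsum : ∑ j, IsLocalRing.residue R (v j) • b j = 0 :=
    calc ∑ j, algebraMap R k (v j) • b j
      _ = 1 ⊗ₜ[R] Fintype.linearCombination R m v := by
        simp [Fintype.linearCombination_apply, TensorProduct.tmul_sum, ← hm, algebraMap_smul]
      _ = 0 := by rw [LinearMap.mem_ker.1 hv, TensorProduct.tmul_zero]
  rw [pi_eq_sum_univ' v]
  refine Submodule.sum_mem _ fun j _ => Submodule.smul_mem_smul ?_ trivial
  exact (IsLocalRing.residue_eq_zero_iff _).1
    (Fintype.linearIndependent_iff.1 b.linearIndependent _ hsum j)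

end MinimalCovers

section Depth

variable (R : Type u) [CommRing R] [IsLocalRing R] (M : Type u) [AddCommGroup M] [Module R M]

local notation "𝔪" => IsLocalRing.maximalIdeal R

/-- `depth M ≥ n`, through the vanishing of `Ext^i(R ⧸ 𝔪, M)` for `i < n`. -/
def HasDepthGE (n : ℕ) : Prop :=
  ∀ i < n, Subsingleton (ExtModule R (R ⧸ 𝔪) M i)

/-- `M` has depth `n` and type one: the first nonvanishing `Ext^i(R ⧸ 𝔪, M)` is in degree `n`,
where it is one-dimensional. -/
structure HasDepthOfTypeOne (n : ℕ) : Prop where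
  hasDepthGE : HasDepthGE R M n
  isSimpleModule_ext : IsSimpleModule R (ExtModule R (R ⧸ 𝔪) M n)

variable {R M} {A B C : Type u} [AddCommGroup A] [Module R A] [AddCommGroup B] [Module R B]
  [AddCommGroup C] [Module R C] {f : A →ₗ[R] B} {g : B →ₗ[R] C} {d n : ℕ}

theorem HasDepthGE.of_free [Module.Free R M] [Module.Finite R M] (hR : HasDepthGE R R n) :
    HasDepthGE R M n := fun i hi =>
  have := hR i hi
  ExtModule.subsingleton_of_free

theorem HasDepthGE.of_isShortExact (hC : HasDepthGE R C n) (h : IsShortExact f g)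
    (hB : HasDepthGE R B d) (hd : d ≤ n + 1) : HasDepthGE R A d := fun i hi =>
  have := hB i hi
  (ExtModule.map_injective h fun j hj => hC j (by omega)).subsingleton

theorem HasDepthOfTypeOne.of_isShortExact (hC : HasDepthOfTypeOne R C n) (h : IsShortExact f g)
    (hB : HasDepthGE R B (n + 1)) (hf : ExtModule.map (R ⧸ 𝔪) (n + 1) f = 0) :
    HasDepthOfTypeOne R A (n + 1) where
  hasDepthGE := hC.hasDepthGE.of_isShortExact h hB le_rfl
  isSimpleModule_ext := by
    obtain ⟨e⟩ := ExtModule.nonempty_equiv_succ h (hB n n.lt_succ_self) hf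
    have := hC.isSimpleModule_ext
    exact IsSimpleModule.congr e.symm

theorem HasDepthOfTypeOne.of_isShortExact_of_hasDepthGE (hC : HasDepthOfTypeOne R C n)
    (h : IsShortExact f g) (hB : HasDepthGE R B (n + 2)) : HasDepthOfTypeOne R A (n + 1) :=
  have := hB (n + 1) (n + 1).lt_succ_self
  hC.of_isShortExact h (fun i hi => hB i (hi.trans (n + 1).lt_succ_self))
    (LinearMap.ext fun _ => Subsingleton.elim _ _)

theorem IsIrreducibleParameterSequence.hasDepthOfTypeOne {S : Type u} [CommRing S]
    [IsLocalRing S] [Algebra R S] (hs : Function.Surjective (algebraMap R S)) {ys : List R}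
    (h : IsIrreducibleParameterSequence (ys.map (algebraMap R S))) :
    HasDepthOfTypeOne R S ys.length where
  hasDepthGE _ hi := ExtModule.subsingleton_of_lt_length h.isWeaklyRegular_of_map
    (fun y hy => smul_quotient_eq_zero (h.mem_maximalIdeal_of_map hs y hy)) hi
  isSimpleModule_ext := h.isSimpleModule_ext hs

end Depth

section AuslanderBuchsbaum

variable {R : Type u} [CommRing R] {F M : Type u} [AddCommGroup F] [Module R F] [Module.Free R F]
  [AddCommGroup M] [Module R M]

theorem hasProjectiveDimensionLT_ker {f : F →ₗ[R] M} (hf : Function.Surjective f) {n : ℕ}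
    [h : HasProjectiveDimensionLT (ModuleCat.of R M) (n + 2)] :
    HasProjectiveDimensionLT (ModuleCat.of R (LinearMap.ker f)) (n + 1) :=
  ((isShortExact_subtype_ker hf).shortExact.hasProjectiveDimensionLT_X₃_iff n
    (ModuleCat.projective_of_free (Module.Free.chooseBasis R F))).1 h

variable [IsNoetherianRing R] [IsLocalRing R] {d : ℕ}

local notation "𝔪" => IsLocalRing.maximalIdeal R

theorem free_of_free_ker [Nontrivial (ExtModule R (R ⧸ 𝔪) R d)] (hM : HasDepthGE R M d)
    [Module.Finite R F] {f : F →ₗ[R] M} (hf : Function.Surjective f)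
    (hker : LinearMap.ker f ≤ 𝔪 • ⊤) [Module.Free R (LinearMap.ker f)] : Module.Free R M := by
  have hinj := ExtModule.map_injective (isShortExact_subtype_ker hf) (X := R ⧸ 𝔪) (i := d)
    fun j hj => hM j (by omega)
  have hzero := ExtModule.map_eq_zero_of_range_le (f := (LinearMap.ker f).subtype)
    ((Submodule.range_subtype _).trans_le hker) d
  have : Subsingleton (ExtModule R (R ⧸ 𝔪) (LinearMap.ker f) d) :=
    subsingleton_of_forall_eq 0 fun e => hinj (by rw [hzero]; rfl)
  let b := Module.Free.chooseBasis R (LinearMap.ker f)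
  have := ExtModule.isEmpty_of_basis_of_subsingleton b (R ⧸ 𝔪) d
  have : Subsingleton (LinearMap.ker f) := b.repr.toEquiv.subsingleton
  exact Module.Free.of_equiv (LinearEquiv.ofBijective f
    ⟨LinearMap.ker_eq_bot.1 (Submodule.eq_bot_of_subsingleton (p := LinearMap.ker f)), hf⟩)

theorem free_of_hasProjectiveDimensionLT {M : Type u} [AddCommGroup M] [Module R M]
    [Module.Finite R M] (hR : HasDepthGE R R d) [Nontrivial (ExtModule R (R ⧸ 𝔪) R d)]
    (hM : HasDepthGE R M d) :
    ∀ n : ℕ, HasProjectiveDimensionLT (ModuleCat.of R M) (n + 1) → Module.Free R M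
  | 0, hn => by
    have := (IsProjective.iff_projective M).2 (projective_iff_hasProjectiveDimensionLT_one.2 hn)
    exact Module.free_of_flat_of_isLocalRing
  | n + 1, hn => by
    obtain ⟨m, f, hf, hker⟩ := exists_surjective_ker_le_smul_top (R := R) M
    have : Module.Free R (LinearMap.ker f) := free_of_hasProjectiveDimensionLT hR
      (hM.of_isShortExact (isShortExact_subtype_ker hf) (.of_free hR) d.le_succ) n
      (hasProjectiveDimensionLT_ker hf)
    exact free_of_free_ker hM hf hker

end AuslanderBuchsbaum

section Resolution

variable {R : Type u} [CommRing R] {I : Ideal R}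

theorem isGorensteinResolution_of_ker {F G : Type*} [AddCommGroup F] [Module R F]
    [AddCommGroup G] [Module R G] {f : F →ₗ[R] I} {g : G →ₗ[R] LinearMap.ker f}
    (hg : Function.Surjective g) (e : R ≃ₗ[R] LinearMap.ker g) :
    IsGorensteinResolution ((LinearMap.ker g).subtype ∘ₗ e.toLinearMap)
      ((LinearMap.ker f).subtype ∘ₗ g) (I.subtype ∘ₗ f) where
  injective := (Submodule.subtype_injective _).comp e.injective
  exact_left := by
    rw [LinearMap.exact_iff, LinearMap.ker_comp_of_ker_eq_bot _ (Submodule.ker_subtype _),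
      LinearMap.range_comp_of_range_eq_top _ (LinearEquiv.range e), Submodule.range_subtype]
  exact_right := by
    rw [LinearMap.exact_iff, LinearMap.ker_comp_of_ker_eq_bot _ (Submodule.ker_subtype _),
      LinearMap.range_comp_of_range_eq_top _ (LinearMap.range_eq_top.2 hg), Submodule.range_subtype]

theorem exists_isGorensteinResolution [IsNoetherianRing R] [IsLocalRing R] {s n : ℕ}
    (hR : HasDepthOfTypeOne R R (s + 3)) (hI : HasDepthOfTypeOne R (R ⧸ I) s)
    [HasProjectiveDimensionLE (ModuleCat.of R I) n] :
    ∃ (p q : ℕ) (ψ : R →ₗ[R] Fin q → R) (φ : (Fin q → R) →ₗ[R] Fin p → R)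
      (d : (Fin p → R) →ₗ[R] R), IsGorensteinResolution ψ φ d ∧ LinearMap.range d = I ∧
        ∀ g, φ g ∈ IsLocalRing.maximalIdeal R • (⊤ : Submodule R (Fin p → R)) := by
  obtain ⟨p, f, hf, hf_ker⟩ := exists_surjective_ker_le_smul_top (R := R) I
  obtain ⟨q, g, hg, hg_ker⟩ := exists_surjective_ker_le_smul_top (R := R) (LinearMap.ker f)
  have hdepth {m : ℕ} (hm : m ≤ s + 3) : HasDepthGE R R m := fun i hi =>
    hR.hasDepthGE i (hi.trans_le hm)
  have hI₁ : HasDepthOfTypeOne R I (s + 1) :=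
    hI.of_isShortExact_of_hasDepthGE (isShortExact_subtype_mkQ I) (hdepth (by omega))
  have hI₂ : HasDepthOfTypeOne R (LinearMap.ker f) (s + 2) :=
    hI₁.of_isShortExact_of_hasDepthGE (isShortExact_subtype_ker hf) (.of_free (hdepth le_rfl))
  have : HasProjectiveDimensionLT (ModuleCat.of R I) (n + 3) :=
    hasProjectiveDimensionLT_of_ge _ (n + 1) _ (by omega)
  have := hasProjectiveDimensionLT_ker hf (n := n + 1)
  have := hR.isSimpleModule_ext
  have := IsSimpleModule.nontrivial R (ExtModule R (R ⧸ IsLocalRing.maximalIdeal R) R (s + 3))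
  have : Module.Free R (LinearMap.ker g) := free_of_hasProjectiveDimensionLT hR.hasDepthGE
    (hI₂.hasDepthGE.of_isShortExact (isShortExact_subtype_ker hg) (.of_free hR.hasDepthGE) le_rfl)
    n (hasProjectiveDimensionLT_ker hg)
  have hI₃ : HasDepthOfTypeOne R (LinearMap.ker g) (s + 3) :=
    hI₂.of_isShortExact (isShortExact_subtype_ker hg) (.of_free hR.hasDepthGE)
      (ExtModule.map_eq_zero_of_range_le ((Submodule.range_subtype _).trans_le hg_ker) _)
  have := hI₃.isSimpleModule_ext
  obtain ⟨e⟩ := ExtModule.nonempty_linearEquiv_of_isSimpleModule (R := R)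
    (K := LinearMap.ker g) (R ⧸ IsLocalRing.maximalIdeal R) (s + 3)
  refine ⟨p, q, _, _, _, isGorensteinResolution_of_ker hg e, ?_, fun x => hf_ker (g x).2⟩
  rw [LinearMap.range_comp_of_range_eq_top _ (LinearMap.range_eq_top.2 hf), Submodule.range_subtype]

end Resolution

end GorensteinHeightThree

theorem isSyzygetic_of_gorenstein_height_three_general
    (R : Type u) [CommRing R] (hR : IsGorensteinLocalRing R) (I : Ideal R)
    (hht : idealHeight I = 3)
    (hpd : ∃ n : ℕ, projectiveDimensionLE R (ModuleCat.of R I) n)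
    (hGor : IsGorensteinLocalRing (R ⧸ I)) :
    I.IsSyzygetic := by
  open GorensteinHeightThree in
  have := hR.1
  have := hR.2.1
  have := hGor.1
  have := hGor.2.1
  obtain ⟨nR, _⟩ := exists_hasInjectiveDimensionLT_of_isGorensteinLocalRing hR
  obtain ⟨nI, _⟩ := exists_hasInjectiveDimensionLT_of_isGorensteinLocalRing hGor
  obtain ⟨xs, hxs⟩ := exists_isIrreducibleParameterSequence (R := R) nR
  obtain ⟨ys', hys⟩ := exists_isIrreducibleParameterSequence (R := R ⧸ I) nI
  obtain ⟨ys, rfl⟩ := List.map_surjective_iff.2 Ideal.Quotient.mk_surjective ys'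
  obtain ⟨hlen, rs, hrs, hmem, hreg⟩ :=
    length_eq_add_height_and_exists_isRegular hxs hys (idealHeight_eq_height I ▸ hht)
  obtain ⟨a, b, c, rfl⟩ := List.length_eq_three.1 hrs
  obtain ⟨n, hn⟩ := hpd
  have := hasProjectiveDimensionLE_of_projectiveDimensionLE hn
  have hdepth : HasDepthOfTypeOne R R xs.length :=
    IsIrreducibleParameterSequence.hasDepthOfTypeOne Function.surjective_id (by simpa using hxs)
  have hdepthI : HasDepthOfTypeOne R (R ⧸ I) ys.length :=
    hys.hasDepthOfTypeOne Ideal.Quotient.mk_surjective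
  obtain ⟨_, _, ψ, φ, d, hres, rfl, hmin⟩ :=
    exists_isGorensteinResolution (hlen ▸ hdepth) hdepthI (n := n)
  exact hres.isSyzygetic hmin hreg.toIsWeaklyRegular (hmem a (by simp)) (hmem b (by simp))
    (hmem c (by simp))

/-- Let `R` be a Gorenstein Noetherian local ring and `I` an ideal of height `3` which has
finite projective dimension as an `R`-module, is generically a complete intersection
(localized at each associated prime of `I`, it is generated by a regular sequence), and
such that `R ⧸ I` is Gorenstein. Then `I` is syzygetic. -/
theorem isSyzygetic_of_gorenstein_height_three
    (R : Type u) [CommRing R] [IsNoetherianRing R] [IsLocalRing R]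
    (hR : IsGorensteinLocalRing R) (I : Ideal R)
    (hht : idealHeight I = 3)
    (hpd : ∃ n : ℕ, projectiveDimensionLE R (ModuleCat.of R I) n)
    (hgci : ∀ (p : Ideal R) (hp : p ∈ associatedPrimes R (R ⧸ I)),
      haveI : p.IsPrime := hp.isPrime
      ∃ rs : List (Localization.AtPrime p),
        RingTheory.Sequence.IsRegular (Localization.AtPrime p) rs ∧
          Ideal.span {a | a ∈ rs} = I.map (algebraMap R (Localization.AtPrime p)))
    (hGor : IsGorensteinLocalRing (R ⧸ I)) :
    I.IsSyzygetic :=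
  isSyzygetic_of_gorenstein_height_three_general R hR I hht hpd hGor
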